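/- Let Ω be a bounded Lipschitz domain in ℝ^N (N ≥ 2), x₀ ∈ Ω, a > 0, V ∈ 𝒱(Ω,a), let y ∈ ∂Ω and let ν_y be a pseudo-normal at y for Ω. Then there is a constant C' > 0 such that for all sufficiently small t > 0: K_y(y + tν_y) ≤ C' · K_y^V(y + tν_y). -/

import Mathlib

open MeasureTheory Metric Set Filter Topology
open scoped ENNReal NNReal

noncomputable section

namespace Anc

abbrev ES (N : ℕ) := EuclideanSpace ℝ (Fin N)

/-- `δ_Ω(x)`: the distance from `x` to the complement of `Ω`. -/
def dista {N : ℕ} (Ω : Set (ES N)) (x : ES N) : ℝ := infDist x Ωᶜ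

/-- Pointwise Laplacian (junk values where the derivatives do not exist). -/
def lap {N : ℕ} (u : ES N → ℝ) (x : ES N) : ℝ :=
  ∑ i : Fin N,
    fderiv ℝ (fun y => fderiv ℝ u y (EuclideanSpace.single i 1)) x (EuclideanSpace.single i 1)

/-- Smooth compactly supported test functions in `Ω`. -/
def IsTestFun {N : ℕ} (Ω : Set (ES N)) (φ : ES N → ℝ) : Prop :=
  ContDiff ℝ (⊤ : ℕ∞) φ ∧ IsCompact (tsupport φ) ∧ tsupport φ ⊆ Ω

/-- `u` is a continuous weak solution of `Δu - V·u = 0` in `Ω` (i.e. `L_V`-harmonic). -/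
def LVHarmonic {N : ℕ} (Ω : Set (ES N)) (V u : ES N → ℝ) : Prop :=
  ContinuousOn u Ω ∧ LocallyIntegrableOn u Ω ∧
    LocallyIntegrableOn (fun x => V x * u x) Ω ∧
    ∀ φ, IsTestFun Ω φ → ∫ x in Ω, u x * lap φ x = ∫ x in Ω, V x * u x * φ x

/-- `s` is `L_V`-superharmonic in `Ω` (weakly, `Δs - V·s ≤ 0`, `s` l.s.c.). -/
def LVSuperharmonic {N : ℕ} (Ω : Set (ES N)) (V s : ES N → ℝ) : Prop :=
  LowerSemicontinuousOn s Ω ∧ LocallyIntegrableOn s Ω ∧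
    LocallyIntegrableOn (fun x => V x * s x) Ω ∧
    ∀ φ, IsTestFun Ω φ → (∀ x, 0 ≤ φ x) →
      ∫ x in Ω, s x * lap φ x ≤ ∫ x in Ω, V x * s x * φ x

/-- The class `𝒱(Ω,a)` of nonnegative Borel potentials with `V(x) ≤ a/δ_Ω(x)²`. -/
def VClass {N : ℕ} (Ω : Set (ES N)) (a : ℝ) (V : ES N → ℝ) : Prop :=
  Measurable V ∧ ∀ x ∈ Ω, 0 ≤ V x ∧ V x * dista Ω x ^ 2 ≤ a

/-- Lipschitz domain: open, connected, and near every boundary point, after an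
orthogonal change of coordinates, the domain is the region above the graph of a
Lipschitz function. -/
def IsLipschitzDomain {N : ℕ} (Ω : Set (ES N)) : Prop :=
  IsOpen Ω ∧ IsConnected Ω ∧
    ∀ z ∈ frontier Ω, ∃ (g : ES N ≃ₗᵢ[ℝ] ES N) (i : Fin N) (f : ES N → ℝ)
      (L : ℝ≥0) (ε : ℝ), 0 < ε ∧ LipschitzWith L f ∧
      (∀ x w : ES N, (∀ j, j ≠ i → x j = w j) → f x = f w) ∧
      ∀ x ∈ ball z ε, (x ∈ Ω ↔ f (g x) < g x i)

/-- `Ω` has a `C^{1,α}` boundary near `y`. -/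
def IsC1AlphaNear {N : ℕ} (Ω : Set (ES N)) (α : ℝ) (y : ES N) : Prop :=
  ∃ (g : ES N ≃ₗᵢ[ℝ] ES N) (i : Fin N) (f : ES N → ℝ) (C : ℝ≥0) (ε : ℝ),
    0 < ε ∧ ContDiff ℝ 1 f ∧ HolderWith C α.toNNReal (fderiv ℝ f) ∧
    (∀ x w : ES N, (∀ j, j ≠ i → x j = w j) → f x = f w) ∧
    ∀ x ∈ ball y ε, (x ∈ Ω ↔ f (g x) < g x i)

/-- `K` is the `L_V`-Martin kernel of `Ω` with pole `y ∈ ∂Ω`, normalized at `x₀`: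
the unique positive `L_V`-harmonic function vanishing on `∂Ω ∖ {y}` with `K x₀ = 1`. -/
def IsMartinKernel {N : ℕ} (Ω : Set (ES N)) (V : ES N → ℝ) (x₀ y : ES N)
    (K : ES N → ℝ) : Prop :=
  LVHarmonic Ω V K ∧ (∀ x ∈ Ω, 0 < K x) ∧ K x₀ = 1 ∧
    ∀ z ∈ frontier Ω, z ≠ y → Tendsto K (𝓝[Ω] z) (𝓝 0)

/-- `G` is the `L_V`-Green function of `Ω` with pole `y ∈ Ω`:
positive, vanishing at the boundary, and `L_V G = -δ_y` weakly. -/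
def IsGreenFunction {N : ℕ} (Ω : Set (ES N)) (V : ES N → ℝ) (y : ES N)
    (G : ES N → ℝ) : Prop :=
  ContinuousOn G (Ω \ {y}) ∧ (∀ x ∈ Ω \ {y}, 0 < G x) ∧ LocallyIntegrableOn G Ω ∧
    (∀ z ∈ frontier Ω, Tendsto G (𝓝[Ω \ {y}] z) (𝓝 0)) ∧
    ∀ φ, IsTestFun Ω φ → ∫ x in Ω, G x * (lap φ x - V x * φ x) = -φ y

/-- `y ∈ ∂Ω` is finely regular w.r.t. `V`, `Ky` being the classical Martin kernel at
`y`: the greatest `L_V`-harmonic minorant of `Ky` is positive, equivalently `Ky`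
admits a positive `L_V`-harmonic minorant. -/
def FinelyRegular {N : ℕ} (Ω : Set (ES N)) (V Ky : ES N → ℝ) : Prop :=
  ∃ h, LVHarmonic Ω V h ∧ (∀ x ∈ Ω, 0 < h x) ∧ ∀ x ∈ Ω, h x ≤ Ky x

/-- `h` is the greatest nonnegative `L_V`-harmonic minorant of `w` in `Ω`. -/
def IsGreatestLVHarmMinorant {N : ℕ} (Ω : Set (ES N)) (V w h : ES N → ℝ) : Prop :=
  LVHarmonic Ω V h ∧ (∀ x ∈ Ω, 0 ≤ h x ∧ h x ≤ w x) ∧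
    ∀ g, LVHarmonic Ω V g → (∀ x ∈ Ω, 0 ≤ g x ∧ g x ≤ w x) → ∀ x ∈ Ω, g x ≤ h x

/-- Classical superharmonicity via the sub-mean value property. -/
def IsSuperharmonicOn {N : ℕ} (W : Set (ES N)) (s : ES N → ℝ) : Prop :=
  LowerSemicontinuousOn s W ∧ LocallyIntegrableOn s W ∧
    ∀ x ∈ W, ∀ t > (0:ℝ), closedBall x t ⊆ W → ⨍ z in ball x t, s z ≤ s x

/-- The réduite of `w` over `A` in `W`: infimum of the nonnegative superharmonic
functions in `W` dominating `w` on `A`. -/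
def reduite {N : ℕ} (W : Set (ES N)) (w : ES N → ℝ) (A : Set (ES N)) (x : ES N) : ℝ :=
  sInf {v | ∃ s : ES N → ℝ, IsSuperharmonicOn W s ∧ (∀ z ∈ W, 0 ≤ s z) ∧
    (∀ z ∈ A, w z ≤ s z) ∧ v = s x}

/-- The lower semicontinuous regularization `R̂` of the réduite. -/
def reduiteReg {N : ℕ} (W : Set (ES N)) (w : ES N → ℝ) (A : Set (ES N)) (x : ES N) : ℝ :=
  liminf (reduite W w A) (𝓝[W] x)

/-- Nontangential approach region at `y` with aperture `κ`. -/
def ntRegion {N : ℕ} (Ω : Set (ES N)) (y : ES N) (κ : ℝ) : Set (ES N) :=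
  {x | x ∈ Ω ∧ dist x y ≤ κ * dista Ω x}

/-- `g` tends to `l` nontangentially at `y`. -/
def TendstoNT {N : ℕ} (Ω : Set (ES N)) (g : ES N → ℝ) (y : ES N) (l : Filter ℝ) : Prop :=
  ∀ κ > (0:ℝ), Tendsto g (𝓝[ntRegion Ω y κ] y) l

/-- Truncated cone `{y + t(ν+v) : 0 < t ≤ η, ‖v‖ ≤ η}` with vertex `y`. -/
def truncCone {N : ℕ} (y ν : ES N) (η : ℝ) : Set (ES N) :=
  {x | ∃ (t : ℝ) (v : ES N), 0 < t ∧ t ≤ η ∧ ‖v‖ ≤ η ∧ x = y + t • (ν + v)}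

/-- Last coordinate of a point of `ℝ^{n+1}`. -/
def lastC {n : ℕ} (x : ES (n + 1)) : ℝ := x (Fin.last n)

/-- First `n` coordinates of a point of `ℝ^{n+1}`. -/
def firstC {n : ℕ} (x : ES (n + 1)) : ES n :=
  (EuclideanSpace.equiv (Fin n) ℝ).symm fun i => x i.castSucc

/-- The region `U_f(r,ρ) = {(x',x_N) : |x'| < r, f(x') < x_N < ρ}`. -/
def Ucyl {n : ℕ} (f : ES n → ℝ) (r ρ : ℝ) : Set (ES (n + 1)) :=
  {x | ‖firstC x‖ < r ∧ f (firstC x) < lastC x ∧ lastC x < ρ}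

/-- The cylinder `T(t) = B_{N-1}(0,tr) × (-tρ, tρ)`. -/
def Tcyl (n : ℕ) (r ρ t : ℝ) : Set (ES (n + 1)) :=
  {x | ‖firstC x‖ < t * r ∧ |lastC x| < t * ρ}

/-- The graph part `∂_#U` of the boundary of `U_f(r,ρ)`. -/
def graphBdry {n : ℕ} (f : ES n → ℝ) (r ρ : ℝ) : Set (ES (n + 1)) :=
  frontier (Ucyl f r ρ) ∩ {x | ‖firstC x‖ < r ∧ lastC x = f (firstC x)}

section Part1

/-! ## The smooth radial kernel -/

/-- profile of the averaging kernel -/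
def qf (s : ℝ) : ℝ := expNegInvGlue (1 - s)

/-- primitive of the profile -/
def pf (s : ℝ) : ℝ := (1 / 2) * ∫ t in s..1, qf t

lemma qf_contDiff : ContDiff ℝ (⊤ : ℕ∞) qf :=
  expNegInvGlue.contDiff.comp (contDiff_const.sub contDiff_id)

lemma qf_cont : Continuous qf := qf_contDiff.continuous

lemma qf_nonneg (s : ℝ) : 0 ≤ qf s := expNegInvGlue.nonneg _

lemma qf_zero {s : ℝ} (h : 1 ≤ s) : qf s = 0 := expNegInvGlue.zero_of_nonpos (by linarith)

lemma qf_pos {s : ℝ} (h : s < 1) : 0 < qf s := expNegInvGlue.pos_of_pos (by linarith)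

lemma qf_anti : Antitone qf := fun _ _ h => expNegInvGlue.monotone (by linarith)

lemma pf_hasDerivAt (s : ℝ) : HasDerivAt pf (-(1 / 2) * qf s) s := by
  have h := intervalIntegral.integral_hasDerivAt_left
    (qf_cont.intervalIntegrable s 1) (qf_cont.stronglyMeasurableAtFilter _ _) qf_cont.continuousAt
  have := h.const_mul (1 / 2 : ℝ)
  exact this.congr_deriv (by ring)

lemma pf_deriv : deriv pf = fun s => -(1 / 2) * qf s := funext fun s => (pf_hasDerivAt s).deriv

lemma pf_contDiff : ContDiff ℝ (⊤ : ℕ∞) pf := by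
  rw [contDiff_infty_iff_deriv]
  refine ⟨fun s => (pf_hasDerivAt s).differentiableAt, ?_⟩
  rw [pf_deriv]
  exact contDiff_const.mul qf_contDiff

lemma pf_zero {s : ℝ} (h : 1 ≤ s) : pf s = 0 := by
  have : ∫ t in s..1, qf t = ∫ t in s..1, (0 : ℝ) := by
    apply intervalIntegral.integral_congr
    intro t ht
    rw [uIcc_of_ge h] at ht
    exact qf_zero ht.1
  simp [pf, this]

lemma pf_nonneg (s : ℝ) : 0 ≤ pf s := by
  rcases le_total 1 s with h | h
  · rw [pf_zero h]
  · have := intervalIntegral.integral_nonneg (μ := volume) h (fun t _ => qf_nonneg t)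
    unfold pf; linarith

lemma pf_le {s : ℝ} (hs : 0 ≤ s) : pf s ≤ (1 / 2) * qf s := by
  rcases le_total 1 s with h | h
  · rw [pf_zero h, qf_zero h]; simp
  · have h1 : ∫ t in s..1, qf t ≤ ∫ t in s..1, qf s := by
      apply intervalIntegral.integral_mono_on h (qf_cont.intervalIntegrable _ _)
        (by simp)
      intro t ht
      exact qf_anti ht.1
    simp only [intervalIntegral.integral_const, smul_eq_mul] at h1
    have := qf_nonneg s
    unfold pf
    nlinarith

/-- averaging kernel -/
def kern {N : ℕ} (r : ℝ) (x w : ES N) : ℝ := (r ^ N)⁻¹ * qf (‖w - x‖ ^ 2 / r ^ 2)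

/-- total mass of the kernel -/
def mass (N : ℕ) : ℝ := ∫ w : ES N, qf (‖w‖ ^ 2)

variable {N : ℕ}

lemma kern_nonneg {r : ℝ} (hr : 0 < r) (x w : ES N) : 0 ≤ kern r x w := by
  unfold kern; have := qf_nonneg (‖w - x‖ ^ 2 / r ^ 2); positivity

lemma kern_zero {r : ℝ} (hr : 0 < r) {x w : ES N} (h : w ∉ ball x r) : kern r x w = 0 := by
  unfold kern
  rw [qf_zero, mul_zero]
  rw [mem_ball, not_lt, dist_eq_norm] at h
  rw [one_le_div (by positivity)]
  gcongr

lemma kern_pos {r : ℝ} (hr : 0 < r) {x w : ES N} (h : w ∈ ball x r) : 0 < kern r x w := by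
  unfold kern
  rw [mem_ball, dist_eq_norm] at h
  have : 0 < qf (‖w - x‖ ^ 2 / r ^ 2) := by
    apply qf_pos
    rw [div_lt_one (by positivity)]
    gcongr
  positivity

lemma kern_cont (r : ℝ) (x : ES N) : Continuous (kern r x) := by
  unfold kern
  exact continuous_const.mul (qf_cont.comp (by fun_prop))

lemma kern_integral {r : ℝ} (hr : 0 < r) (x : ES N) : ∫ w, kern r x w = mass N := by
  have h1 : ∫ w, kern r x w = ∫ w : ES N, (r ^ N)⁻¹ * qf (‖w‖ ^ 2 / r ^ 2) :=
    integral_sub_right_eq_self (fun w : ES N => (r ^ N)⁻¹ * qf (‖w‖ ^ 2 / r ^ 2)) x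
  rw [h1, integral_const_mul]
  have h2 := Measure.integral_comp_inv_smul_of_nonneg (volume : Measure (ES N))
    (fun w : ES N => qf (‖w‖ ^ 2)) hr.le
  simp only [finrank_euclideanSpace, Fintype.card_fin, smul_eq_mul] at h2
  have h3 : (fun w : ES N => qf (‖w‖ ^ 2 / r ^ 2)) = fun w => qf (‖r⁻¹ • w‖ ^ 2) := by
    funext w
    rw [norm_smul, norm_inv, Real.norm_of_nonneg hr.le]
    congr 1
    field_simp
  rw [h3, h2, ← mul_assoc, inv_mul_cancel₀ (by positivity), one_mul]
  rfl

lemma kern_hasCompactSupport {r : ℝ} (hr : 0 < r) (x : ES N) : HasCompactSupport (kern r x) :=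
  HasCompactSupport.intro (isCompact_closedBall x r) fun _ hw =>
    kern_zero hr fun h => hw (ball_subset_closedBall h)

lemma kern_integrable {r : ℝ} (hr : 0 < r) (x : ES N) : Integrable (kern r x) :=
  (kern_cont r x).integrable_of_hasCompactSupport (kern_hasCompactSupport hr x)

lemma mass_pos (N : ℕ) : 0 < mass N := by
  rw [← kern_integral one_pos (0 : ES N)]
  apply (kern_cont 1 (0 : ES N)).integral_pos_of_hasCompactSupport_nonneg_nonzero
    (kern_hasCompactSupport one_pos 0) (fun w => kern_nonneg one_pos 0 w) (x := 0)
  exact (kern_pos one_pos (mem_ball_self one_pos)).ne'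

/-! ## Radial Laplacian -/

lemma hasFDerivAt_normsq (x w : ES N) :
    HasFDerivAt (fun w : ES N => ‖w - x‖ ^ 2) (2 • innerSL ℝ (w - x)) w := by
  simpa using ((hasFDerivAt_id w).sub_const x).norm_sq

lemma fderiv_radial (Θ : ℝ → ℝ) (hΘ : Differentiable ℝ Θ) (x w : ES N) (i : Fin N) :
    fderiv ℝ (fun w : ES N => Θ (‖w - x‖ ^ 2)) w (EuclideanSpace.single i 1)
      = 2 * deriv Θ (‖w - x‖ ^ 2) * (w - x) i := by
  have h := (hΘ (‖w - x‖ ^ 2)).hasDerivAt.comp_hasFDerivAt w (hasFDerivAt_normsq x w)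
  have h2 : HasFDerivAt (fun w : ES N => Θ (‖w - x‖ ^ 2)) _ w := h
  rw [h2.fderiv]
  simp [EuclideanSpace.inner_single_right]
  ring

lemma lap_radial (Θ : ℝ → ℝ) (hΘ : ContDiff ℝ (⊤ : ℕ∞) Θ) (x w : ES N) :
    lap (fun w : ES N => Θ (‖w - x‖ ^ 2)) w
      = 4 * ‖w - x‖ ^ 2 * deriv (deriv Θ) (‖w - x‖ ^ 2) + 2 * N * deriv Θ (‖w - x‖ ^ 2) := by
  have hd : Differentiable ℝ Θ := (contDiff_infty_iff_deriv.1 hΘ).1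
  have hd2 : Differentiable ℝ (deriv Θ) :=
    (contDiff_infty_iff_deriv.1 (contDiff_infty_iff_deriv.1 hΘ).2).1
  unfold lap
  have hterm : ∀ i : Fin N, fderiv ℝ (fun y => fderiv ℝ (fun w : ES N => Θ (‖w - x‖ ^ 2)) y
      (EuclideanSpace.single i 1)) w (EuclideanSpace.single i 1)
      = 4 * deriv (deriv Θ) (‖w - x‖ ^ 2) * ((w - x) i) ^ 2 + 2 * deriv Θ (‖w - x‖ ^ 2) := by
    intro i
    have he : (fun y => fderiv ℝ (fun w : ES N => Θ (‖w - x‖ ^ 2)) y (EuclideanSpace.single i 1))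
        = fun y => 2 * (deriv Θ (‖y - x‖ ^ 2) * (y - x) i) := by
      funext y; rw [fderiv_radial Θ hd]; ring
    rw [he]
    have h0 := (hd2 (‖w - x‖ ^ 2)).hasDerivAt.comp_hasFDerivAt w (hasFDerivAt_normsq x w)
    have h1 : HasFDerivAt (fun w : ES N => deriv Θ (‖w - x‖ ^ 2)) _ w := h0
    have h2 : HasFDerivAt (fun w : ES N => (w - x) i) (EuclideanSpace.proj i : ES N →L[ℝ] ℝ) w := by
      have := (EuclideanSpace.proj i : ES N →L[ℝ] ℝ).hasFDerivAt (x := w - x)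
      exact this.comp w ((hasFDerivAt_id w).sub_const x)
    have h3 : HasFDerivAt (fun y => 2 * (deriv Θ (‖y - x‖ ^ 2) * (y - x) i)) _ w :=
      ((h1.mul h2).const_mul 2)
    rw [h3.fderiv]
    simp [EuclideanSpace.inner_single_right]
    ring
  simp_rw [hterm]
  rw [Finset.sum_add_distrib, ← Finset.mul_sum]
  have : ‖w - x‖ ^ 2 = ∑ i, ((w - x) i) ^ 2 := by
    rw [EuclideanSpace.norm_sq_eq]; simp
  simp only [Finset.sum_const, Finset.card_univ, Fintype.card_fin, nsmul_eq_mul]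
  rw [← this]; ring

end Part1

section Part2

variable {N : ℕ}

/-! ## Weak solutions and averages -/

/-- continuous weak solutions of `Δu = f` -/
def Weak (U : Set (ES N)) (u f : ES N → ℝ) : Prop :=
  ContinuousOn u U ∧ ∀ φ, IsTestFun U φ → ∫ x in U, u x * lap φ x = ∫ x in U, f x * φ x

/-- weighted average -/
def avg (u : ES N → ℝ) (x : ES N) (r : ℝ) : ℝ := ∫ w, kern r x w * u w

/-- the test function generating the radial derivative of the kernel -/
def phi (r : ℝ) (x w : ES N) : ℝ := r * (r ^ N)⁻¹ * pf (‖w - x‖ ^ 2 / r ^ 2)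

/-- radial derivative of the kernel -/
def dk (r : ℝ) (x w : ES N) : ℝ :=
  r * (r ^ N)⁻¹ * (4 * ‖w - x‖ ^ 2 * (-(1 / 2) * deriv qf (‖w - x‖ ^ 2 / r ^ 2) / (r ^ 2 * r ^ 2))
    + 2 * N * (-(1 / 2) * qf (‖w - x‖ ^ 2 / r ^ 2) / r ^ 2))

lemma qf_deriv_cont : Continuous (deriv qf) :=
  (contDiff_infty_iff_deriv.1 qf_contDiff).2.continuous

lemma qf_diff : Differentiable ℝ qf := (contDiff_infty_iff_deriv.1 qf_contDiff).1

lemma phi_contDiff (r : ℝ) (x : ES N) : ContDiff ℝ (⊤ : ℕ∞) (phi r x) := by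
  unfold phi
  refine contDiff_const.mul (pf_contDiff.comp ?_)
  exact ((contDiff_id.sub contDiff_const).norm_sq ℝ).div_const _

lemma phi_zero {r : ℝ} (hr : 0 < r) {x w : ES N} (h : w ∉ ball x r) : phi r x w = 0 := by
  unfold phi
  rw [pf_zero, mul_zero]
  rw [mem_ball, not_lt, dist_eq_norm] at h
  rw [one_le_div (by positivity)]
  gcongr

lemma phi_nonneg {r : ℝ} (hr : 0 < r) (x w : ES N) : 0 ≤ phi r x w := by
  unfold phi; have := pf_nonneg (‖w - x‖ ^ 2 / r ^ 2); positivity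

lemma phi_le {r : ℝ} (hr : 0 < r) (x w : ES N) : phi r x w ≤ r / 2 * kern r x w := by
  unfold phi kern
  have := pf_le (s := ‖w - x‖ ^ 2 / r ^ 2) (by positivity)
  calc r * (r ^ N)⁻¹ * pf (‖w - x‖ ^ 2 / r ^ 2)
      ≤ r * (r ^ N)⁻¹ * ((1 / 2) * qf (‖w - x‖ ^ 2 / r ^ 2)) := by gcongr
    _ = _ := by ring

lemma lap_phi (r : ℝ) (x w : ES N) : lap (phi r x) w = dk r x w := by
  set c : ℝ := r * (r ^ N)⁻¹ with hc
  have h1 : phi r x = fun w => (fun s => c * pf (s / r ^ 2)) (‖w - x‖ ^ 2) := by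
    funext w; simp [phi, hc]
  have hcd : ContDiff ℝ (⊤ : ℕ∞) (fun s => c * pf (s / r ^ 2)) :=
    contDiff_const.mul (pf_contDiff.comp (contDiff_id.div_const _))
  have hd1 : deriv (fun s => c * pf (s / r ^ 2)) = fun s => c * (-(1 / 2) * qf (s / r ^ 2) / r ^ 2) := by
    funext s
    have h := (pf_hasDerivAt (s / r ^ 2)).comp s ((hasDerivAt_id s).div_const (r ^ 2))
    have h' : HasDerivAt (fun s => c * pf (s / r ^ 2)) _ s := h.const_mul c
    rw [h'.deriv]; ring
  have hd2 : deriv (fun s => c * (-(1 / 2) * qf (s / r ^ 2) / r ^ 2))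
      = fun s => c * (-(1 / 2) * deriv qf (s / r ^ 2) / (r ^ 2 * r ^ 2)) := by
    funext s
    have h := (qf_diff (s / r ^ 2)).hasDerivAt.comp s ((hasDerivAt_id s).div_const (r ^ 2))
    have h' : HasDerivAt (fun s => c * (-(1 / 2) * qf (s / r ^ 2) / r ^ 2)) _ s :=
      ((h.const_mul (-(1 / 2))).div_const (r ^ 2)).const_mul c
    rw [h'.deriv]; field_simp
  rw [h1, lap_radial _ hcd, hd1, hd2]
  unfold dk
  ring

lemma dk_hasDerivAt {r : ℝ} (hr : 0 < r) (x w : ES N) :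
    HasDerivAt (fun r => kern r x w) (dk r x w) r := by
  have h1 : HasDerivAt (fun r : ℝ => (r ^ N)⁻¹) (-(N * r ^ (N - 1)) / (r ^ N) ^ 2) r :=
    (hasDerivAt_pow N r).fun_inv (by positivity)
  have h2 : HasDerivAt (fun r : ℝ => ‖w - x‖ ^ 2 / r ^ 2) (‖w - x‖ ^ 2 * (-(2 * r) / (r ^ 2) ^ 2)) r := by
    have := ((hasDerivAt_pow 2 r).fun_inv (by positivity)).const_mul (‖w - x‖ ^ 2)
    simpa [div_eq_mul_inv] using this
  have h3 := (qf_diff (‖w - x‖ ^ 2 / r ^ 2)).hasDerivAt.comp r h2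
  have h4 : HasDerivAt (fun r => kern r x w) _ r := h1.mul h3
  refine h4.congr_deriv ?_
  unfold dk
  rcases Nat.eq_zero_or_pos N with hN | hN
  · subst hN; simp; field_simp; ring
  · obtain ⟨n, rfl⟩ := Nat.exists_eq_succ_of_ne_zero hN.ne'
    simp only [Nat.succ_eq_add_one, Nat.add_sub_cancel]
    field_simp
    ring

lemma dk_zero {r : ℝ} (hr : 0 < r) {x w : ES N} (h : w ∉ closedBall x r) : dk r x w = 0 := by
  have hs : 1 < ‖w - x‖ ^ 2 / r ^ 2 := by
    rw [mem_closedBall, not_le, dist_eq_norm] at h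
    rw [one_lt_div (by positivity)]
    gcongr
  have h1 : deriv qf (‖w - x‖ ^ 2 / r ^ 2) = 0 := by
    have : qf =ᶠ[𝓝 (‖w - x‖ ^ 2 / r ^ 2)] fun _ => 0 := by
      filter_upwards [Ioi_mem_nhds hs] with s hs using qf_zero (le_of_lt hs)
    rw [this.deriv_eq]; simp
  unfold dk
  rw [h1, qf_zero hs.le]; simp

lemma dk_cont_joint (x : ES N) :
    ContinuousOn (fun z : ℝ × ES N => dk z.1 x z.2) {z | 0 < z.1} := by
  unfold dk
  have h1 : ContinuousOn (fun z : ℝ × ES N => ‖z.2 - x‖ ^ 2 / z.1 ^ 2) {z | 0 < z.1} := by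
    refine ContinuousOn.div (by fun_prop) (by fun_prop) ?_
    rintro z hz; exact pow_ne_zero _ (ne_of_gt hz)
  have h2 := qf_cont.comp_continuousOn h1
  have h3 := qf_deriv_cont.comp_continuousOn h1
  refine ContinuousOn.mul (ContinuousOn.mul (by fun_prop) ?_) (ContinuousOn.add ?_ ?_)
  · exact ContinuousOn.inv₀ (by fun_prop) fun z hz => pow_ne_zero _ (ne_of_gt hz)
  · refine ContinuousOn.mul (by fun_prop) (ContinuousOn.div (continuousOn_const.mul h3) (by fun_prop) ?_)
    rintro z hz
    exact mul_ne_zero (pow_ne_zero _ (ne_of_gt hz)) (pow_ne_zero _ (ne_of_gt hz))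
  · refine ContinuousOn.mul (by fun_prop) (ContinuousOn.div (continuousOn_const.mul h2) (by fun_prop) ?_)
    rintro z hz
    exact pow_ne_zero _ (ne_of_gt hz)

lemma integrable_mul_of_supp {x : ES N} {R r : ℝ} (hrR : r < R) {u φ : ES N → ℝ}
    (hu : ContinuousOn u (ball x R)) (hφ : Continuous φ) (h0 : ∀ w, w ∉ closedBall x r → φ w = 0) :
    Integrable (fun w => φ w * u w) := by
  have h1 : IntegrableOn (fun w => φ w * u w) (closedBall x r) := by
    apply ContinuousOn.integrableOn_compact (isCompact_closedBall x r)
    exact hφ.continuousOn.mul (hu.mono (closedBall_subset_ball hrR))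
  rwa [integrableOn_iff_integrable_of_support_subset] at h1
  intro w hw
  by_contra h
  exact hw (by simp [h0 w h])

lemma integrable_kern_mul {x : ES N} {R r : ℝ} (hr : 0 < r) (hrR : r < R) {u : ES N → ℝ}
    (hu : ContinuousOn u (ball x R)) : Integrable (fun w => kern r x w * u w) :=
  integrable_mul_of_supp hrR hu (kern_cont r x) fun _ hw =>
    kern_zero hr fun h => hw (ball_subset_closedBall h)

lemma phi_testFun {U : Set (ES N)} {x : ES N} {R r : ℝ} (hr : 0 < r) (hrR : r < R)
    (hU : ball x R ⊆ U) : IsTestFun U (phi r x) := by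
  have hs : tsupport (phi r x) ⊆ closedBall x r := by
    apply closure_minimal _ isClosed_closedBall
    intro w hw
    by_contra h
    exact hw (phi_zero hr fun h' => h (ball_subset_closedBall h'))
  exact ⟨phi_contDiff r x, (isCompact_closedBall x r).of_isClosed_subset (isClosed_tsupport _) hs,
    hs.trans ((closedBall_subset_ball hrR).trans hU)⟩

lemma avg_hasDerivAt {U : Set (ES N)} {u f : ES N → ℝ} (h : Weak U u f) {x : ES N} {R r : ℝ}
    (hr : 0 < r) (hrR : r < R) (hU : ball x R ⊆ U) :
    HasDerivAt (avg u x) (∫ w in U, f w * phi r x w) r := by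
  obtain ⟨hc, hw⟩ := h
  have hcR : ContinuousOn u (ball x R) := hc.mono hU
  obtain ⟨R0, h1, h2⟩ := exists_between hrR
  have e1 : ∫ w in U, f w * phi r x w = ∫ w in closedBall x R0, dk r x w * u w := by
    rw [← hw _ (phi_testFun hr hrR hU)]
    rw [setIntegral_eq_integral_of_forall_compl_eq_zero, setIntegral_eq_integral_of_forall_compl_eq_zero]
    · apply integral_congr_ae; filter_upwards with w; rw [lap_phi, mul_comm]
    · intro w hw
      rw [dk_zero hr, zero_mul]
      exact fun h => hw (closedBall_subset_closedBall h1.le h)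
    · intro w hw
      rw [lap_phi, dk_zero hr, mul_zero]
      exact fun h => hw (hU (closedBall_subset_ball hrR h))
  have e2 : avg u x =ᶠ[𝓝 r] fun r => ∫ w in closedBall x R0, kern r x w * u w := by
    filter_upwards [Ioo_mem_nhds hr h1] with s hs
    rw [setIntegral_eq_integral_of_forall_compl_eq_zero]; · rfl
    intro w hw
    rw [kern_zero hs.1, zero_mul]
    exact fun h => hw (ball_subset_closedBall (ball_subset_ball hs.2.le h))
  rw [e1]
  refine HasDerivAt.congr_of_eventuallyEq ?_ e2
  have hcomp : IsCompact (Icc (r / 2) (2 * r) ×ˢ closedBall x R0) :=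
    isCompact_Icc.prod (isCompact_closedBall x R0)
  obtain ⟨D, hD⟩ := hcomp.exists_bound_of_continuousOn
    ((dk_cont_joint x).mono (fun z hz => lt_of_lt_of_le (half_pos hr) hz.1.1))
  have hu0 : ContinuousOn u (closedBall x R0) := hcR.mono (closedBall_subset_ball h2)
  have hui : IntegrableOn u (closedBall x R0) := hu0.integrableOn_compact (isCompact_closedBall x R0)
  have hdkc : Continuous (dk r x) := by
    have := (dk_cont_joint x).comp_continuous (f := fun w : ES N => (r, w)) (by fun_prop) (fun w => hr)
    exact this
  have hnhds : Icc (r / 2) (2 * r) ∈ 𝓝 r := Icc_mem_nhds (by linarith) (by linarith)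
  refine (hasDerivAt_integral_of_dominated_loc_of_deriv_le (bound := fun w => D * ‖u w‖)
    (F := fun s w => kern s x w * u w) (F' := fun s w => dk s x w * u w)
    (s := Icc (r / 2) (2 * r)) hnhds ?_ ?_ ?_ ?_ ?_ ?_).2
  · filter_upwards with s
    exact ((kern_cont s x).continuousOn.mul hu0).aestronglyMeasurable isClosed_closedBall.measurableSet
  · exact ((kern_cont r x).continuousOn.mul hu0).integrableOn_compact (isCompact_closedBall x R0)
  · exact (hdkc.continuousOn.mul hu0).aestronglyMeasurable isClosed_closedBall.measurableSet
  · filter_upwards [ae_restrict_mem isClosed_closedBall.measurableSet] with w hw s hs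
    rw [norm_mul]
    gcongr
    exact hD (s, w) ⟨hs, hw⟩
  · exact hui.norm.const_mul D
  · filter_upwards with w s hs
    exact (dk_hasDerivAt (lt_of_lt_of_le (half_pos hr) hs.1) x w).mul_const _

lemma avg_tendsto {x : ES N} {R : ℝ} (hR : 0 < R) {u : ES N → ℝ} (hu : ContinuousOn u (ball x R)) :
    Tendsto (avg u x) (𝓝[>] 0) (𝓝 (mass N * u x)) := by
  rw [Metric.tendsto_nhds]
  intro ε hε
  have hm := mass_pos N
  have hux := (hu.continuousAt (ball_mem_nhds x hR))
  obtain ⟨ρ, hρ, hρu⟩ := Metric.continuousAt_iff.1 hux (ε / (2 * mass N)) (by positivity)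
  filter_upwards [Ioo_mem_nhdsGT (lt_min hρ hR)] with r hr
  have hrρ := hr.2.trans_le (min_le_left _ _)
  have hrR := hr.2.trans_le (min_le_right _ _)
  have h1 : avg u x r - mass N * u x = ∫ w, kern r x w * (u w - u x) := by
    have e : ∀ w, kern r x w * (u w - u x) = kern r x w * u w - kern r x w * u x := fun w => by ring
    simp_rw [e]
    rw [integral_sub (integrable_kern_mul hr.1 hrR hu) ((kern_integrable hr.1 x).mul_const _),
      integral_mul_const, kern_integral hr.1]
    rfl
  rw [dist_eq_norm, h1]
  have h2 : ‖∫ w, kern r x w * (u w - u x)‖ ≤ ∫ w, kern r x w * (ε / (2 * mass N)) := by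
    apply norm_integral_le_of_norm_le ((kern_integrable hr.1 x).mul_const _)
    filter_upwards with w
    by_cases hw : w ∈ ball x r
    · rw [norm_mul, Real.norm_of_nonneg (kern_nonneg hr.1 x w)]
      have := kern_nonneg hr.1 x w
      gcongr
      have := hρu (ball_subset_ball hrρ.le hw)
      rw [dist_eq_norm] at this
      exact this.le
    · simp [kern_zero hr.1 hw]
  rw [integral_mul_const, kern_integral hr.1] at h2
  have : mass N * (ε / (2 * mass N)) = ε / 2 := by field_simp
  linarith

/-- sub-mean value property -/
lemma weak_sub {U : Set (ES N)} {u f : ES N → ℝ} (h : Weak U u f) {x : ES N} {R r : ℝ}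
    (hr : 0 < r) (hrR : r < R) (hU : ball x R ⊆ U) (hf : ∀ w ∈ ball x R, 0 ≤ f w) :
    mass N * u x ≤ avg u x r := by
  have hmono : MonotoneOn (avg u x) (Ioo 0 R) := by
    apply monotoneOn_of_deriv_nonneg (convex_Ioo 0 R)
    · exact fun s hs => (avg_hasDerivAt h hs.1 hs.2 hU).continuousAt.continuousWithinAt
    · rw [interior_Ioo]
      exact fun s hs => (avg_hasDerivAt h hs.1 hs.2 hU).differentiableAt.differentiableWithinAt
    · rw [interior_Ioo]
      intro s hs
      rw [(avg_hasDerivAt h hs.1 hs.2 hU).deriv]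
      apply integral_nonneg
      intro w
      by_cases hw : w ∈ ball x s
      · exact mul_nonneg (hf w (ball_subset_ball hs.2.le hw)) (phi_nonneg hs.1 x w)
      · simp [phi_zero hs.1 hw]
  refine le_of_tendsto (avg_tendsto (hr.trans hrR) (h.1.mono hU)) ?_
  filter_upwards [Ioo_mem_nhdsGT hr] with s hs
  exact hmono ⟨hs.1, hs.2.trans hrR⟩ ⟨hr, hrR⟩ hs.2.le

lemma weak_super {U : Set (ES N)} {u f : ES N → ℝ} (h : Weak U u f) {x : ES N} {R r A : ℝ}
    (hr : 0 < r) (hrR : r < R) (hU : ball x R ⊆ U)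
    (hu : ∀ w ∈ ball x R, 0 ≤ u w) (hf0 : ∀ w ∈ ball x R, 0 ≤ f w)
    (hf : ∀ w ∈ ball x R, f w ≤ A * u w) (hA : 0 ≤ A) :
    avg u x r ≤ Real.exp (A * r ^ 2 / 4) * (mass N * u x) := by
  have hd : ∀ s ∈ Ioo 0 R, HasDerivAt (fun s => Real.exp (-(A * s ^ 2 / 4)) * avg u x s)
      (Real.exp (-(A * s ^ 2 / 4)) * (-(A * (2 * s) / 4)) * avg u x s
        + Real.exp (-(A * s ^ 2 / 4)) * ∫ w in U, f w * phi s x w) s := by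
    intro s hs
    have h1 : HasDerivAt (fun s : ℝ => -(A * s ^ 2 / 4)) (-(A * (2 * s) / 4)) s := by
      have := (((hasDerivAt_pow 2 s).const_mul A).div_const 4).fun_neg
      exact this.congr_deriv (by push_cast; ring)
    exact h1.exp.mul (avg_hasDerivAt h hs.1 hs.2 hU)
  have hanti : AntitoneOn (fun s => Real.exp (-(A * s ^ 2 / 4)) * avg u x s) (Ioo 0 R) := by
    apply antitoneOn_of_deriv_nonpos (convex_Ioo 0 R)
    · exact fun s hs => (hd s hs).continuousAt.continuousWithinAt
    · rw [interior_Ioo]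
      exact fun s hs => (hd s hs).differentiableAt.differentiableWithinAt
    · rw [interior_Ioo]
      intro s hs
      rw [(hd s hs).deriv]
      have key : ∫ w in U, f w * phi s x w ≤ A * s / 2 * avg u x s := by
        rw [setIntegral_eq_integral_of_forall_compl_eq_zero]
        · unfold avg
          rw [← integral_const_mul]
          apply integral_mono_of_nonneg
          · filter_upwards with w
            by_cases hw : w ∈ ball x s
            · exact mul_nonneg (hf0 w (ball_subset_ball hs.2.le hw)) (phi_nonneg hs.1 x w)
            · simp [phi_zero hs.1 hw]
          · exact (integrable_kern_mul hs.1 hs.2 (h.1.mono hU)).const_mul _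
          · filter_upwards with w
            by_cases hw : w ∈ ball x s
            · have hw' := ball_subset_ball hs.2.le hw
              calc f w * phi s x w ≤ (A * u w) * (s / 2 * kern s x w) :=
                    mul_le_mul (hf w hw') (phi_le hs.1 x w) (phi_nonneg hs.1 x w)
                      (mul_nonneg hA (hu w hw'))
                _ = _ := by ring
            · simp [phi_zero hs.1 hw, kern_zero hs.1 hw]
        · intro w hw
          rw [phi_zero hs.1, mul_zero]
          exact fun h' => hw (hU (ball_subset_ball hs.2.le h'))
      have := Real.exp_pos (-(A * s ^ 2 / 4))
      nlinarith
  have hlim : Tendsto (fun s => Real.exp (-(A * s ^ 2 / 4)) * avg u x s) (𝓝[>] 0)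
      (𝓝 (1 * (mass N * u x))) := by
    refine Tendsto.mul ?_ (avg_tendsto (hr.trans hrR) (h.1.mono hU))
    have : Continuous fun s : ℝ => Real.exp (-(A * s ^ 2 / 4)) := by fun_prop
    have h2 := (this.tendsto 0).mono_left (nhdsWithin_le_nhds (s := Ioi 0))
    simpa using h2
  have h3 : Real.exp (-(A * r ^ 2 / 4)) * avg u x r ≤ 1 * (mass N * u x) := by
    refine ge_of_tendsto hlim ?_
    filter_upwards [Ioo_mem_nhdsGT hr] with s hs
    exact hanti ⟨hs.1, hs.2.trans hrR⟩ ⟨hr, hrR⟩ hs.2.le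
  rw [one_mul, Real.exp_neg, inv_mul_le_iff₀ (Real.exp_pos _)] at h3
  exact h3

end Part2

section Part3

variable {N : ℕ}

/-! ## Sub-mean functions and the maximum principle -/

/-- continuous functions with the sub-mean value property -/
def SubM (U : Set (ES N)) (v : ES N → ℝ) : Prop :=
  ContinuousOn v U ∧ ∀ (x : ES N) (R r : ℝ), 0 < r → r < R → ball x R ⊆ U →
    mass N * v x ≤ avg v x r

lemma SubM.mono {U U' : Set (ES N)} {v : ES N → ℝ} (h : SubM U v) (hs : U' ⊆ U) : SubM U' v :=
  ⟨h.1.mono hs, fun x R r hr hrR hb => h.2 x R r hr hrR (hb.trans hs)⟩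

lemma SubM.add {U : Set (ES N)} {v w : ES N → ℝ} (hv : SubM U v) (hw : SubM U w) :
    SubM U (fun x => v x + w x) := by
  refine ⟨hv.1.add hw.1, fun x R r hr hrR hb => ?_⟩
  have h1 := hv.2 x R r hr hrR hb
  have h2 := hw.2 x R r hr hrR hb
  have h3 : avg (fun x => v x + w x) x r = avg v x r + avg w x r := by
    unfold avg
    rw [← integral_add (integrable_kern_mul hr hrR (hv.1.mono hb))
      (integrable_kern_mul hr hrR (hw.1.mono hb))]
    congr 1; funext z; ring
  rw [h3]; linarith

lemma SubM.smul {U : Set (ES N)} {v : ES N → ℝ} (hv : SubM U v) {c : ℝ} (hc : 0 ≤ c) :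
    SubM U (fun x => c * v x) := by
  refine ⟨continuousOn_const.mul hv.1, fun x R r hr hrR hb => ?_⟩
  have h1 := hv.2 x R r hr hrR hb
  have h3 : avg (fun x => c * v x) x r = c * avg v x r := by
    unfold avg
    rw [← integral_const_mul]
    congr 1; funext z; ring
  rw [h3]; nlinarith

lemma SubM.const {U : Set (ES N)} (c : ℝ) : SubM U (fun _ => c) := by
  refine ⟨continuousOn_const, fun x R r hr hrR hb => ?_⟩
  unfold avg
  rw [integral_mul_const, kern_integral hr]

lemma max_principle (hN : 0 < N) {D : Set (ES N)} (hD : IsOpen D) (hb : Bornology.IsBounded D)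
    {v : ES N → ℝ} (hv : SubM D v)
    (hbd : ∀ z ∈ frontier D, ∀ ε > 0, ∀ᶠ w in 𝓝[D] z, v w ≤ ε) : ∀ x ∈ D, v x ≤ 0 := by
  intro x hx
  by_contra! hpos
  set s := v x with hs
  let Kc : Set (ES N) := {z | z ∈ D ∧ s ≤ v z}
  have hKD : Kc ⊆ D := fun z hz => hz.1
  have hclosed : IsClosed Kc := by
    rw [← closure_subset_iff_isClosed]
    intro z hz
    have hzD : z ∈ closure D := closure_mono hKD hz
    by_cases hzi : z ∈ D
    · refine ⟨hzi, ?_⟩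
      by_contra! hlt
      have h1 : ∀ᶠ w in 𝓝 z, v w < s :=
        (hv.1.continuousAt (hD.mem_nhds hzi)).eventually (gt_mem_nhds hlt)
      obtain ⟨w, hw1, hw2⟩ := (mem_closure_iff_frequently.1 hz).and_eventually h1 |>.exists
      exact absurd hw1.2 (not_le.2 hw2)
    · have hzf : z ∈ frontier D := by
        rw [hD.frontier_eq]; exact ⟨hzD, hzi⟩
      have h1 := hbd z hzf (s / 2) (half_pos hpos)
      rw [eventually_nhdsWithin_iff] at h1
      obtain ⟨w, hw1, hw2⟩ := (mem_closure_iff_frequently.1 hz).and_eventually h1 |>.exists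
      have := hw2 hw1.1
      have := hw1.2
      linarith
  have hcomp : IsCompact Kc := isCompact_of_isClosed_isBounded hclosed (hb.subset hKD)
  obtain ⟨x1, hx1, hmax⟩ := hcomp.exists_isMaxOn ⟨x, hx, le_rfl⟩ (hv.1.mono hKD)
  have hmaxD : ∀ z ∈ D, v z ≤ v x1 := by
    intro z hz
    by_cases h : s ≤ v z
    · exact hmax ⟨hz, h⟩
    · exact (not_le.1 h).le.trans hx1.2
  let Kc2 : Set (ES N) := {z | z ∈ Kc ∧ v x1 ≤ v z}
  have hcl2 : IsClosed Kc2 := by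
    have := (hv.1.mono hKD).preimage_isClosed_of_isClosed hclosed (isClosed_Ici (a := v x1))
    exact this
  have hcomp2 : IsCompact Kc2 := hcomp.of_isClosed_subset hcl2 fun z hz => hz.1
  obtain ⟨x2, hx2, hmax2⟩ := hcomp2.exists_isMaxOn ⟨x1, hx1, le_rfl⟩ continuous_norm.continuousOn
  have hx2D : x2 ∈ D := hx2.1.1
  have hvx2 : v x2 = v x1 := le_antisymm (hmaxD x2 hx2D) hx2.2
  obtain ⟨R, hR, hball⟩ := Metric.isOpen_iff.1 hD x2 hx2D
  have hmean := hv.2 x2 R (R / 2) (by positivity) (by linarith) hball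
  have hr : 0 < R / 2 := by positivity
  have hvc : ContinuousOn v (ball x2 R) := hv.1.mono hball
  have hgc : ContinuousOn (fun w => v x2 - v w) (ball x2 R) := continuousOn_const.sub hvc
  have hint : ∫ w, kern (R / 2) x2 w * (v x2 - v w) ≤ 0 := by
    have e : ∀ w, kern (R / 2) x2 w * (v x2 - v w)
        = kern (R / 2) x2 w * v x2 - kern (R / 2) x2 w * v w := fun w => by ring
    simp_rw [e]
    rw [integral_sub ((kern_integrable hr x2).mul_const _)
      (integrable_kern_mul hr (by linarith) hvc), integral_mul_const, kern_integral hr]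
    unfold avg at hmean
    linarith
  have hnn : ∀ w, 0 ≤ kern (R / 2) x2 w * (v x2 - v w) := by
    intro w
    by_cases hw : w ∈ ball x2 (R / 2)
    · refine mul_nonneg (kern_nonneg hr _ _) ?_
      have := hmaxD w (hball (ball_subset_ball (by linarith) hw))
      linarith
    · simp [kern_zero hr hw]
  have hcont : Continuous (fun w => kern (R / 2) x2 w * (v x2 - v w)) := by
    rw [continuous_iff_continuousAt]
    intro w
    by_cases hw : w ∈ ball x2 R
    · exact (kern_cont _ _).continuousAt.mul (hgc.continuousAt (isOpen_ball.mem_nhds hw))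
    · have h1 : (fun w => kern (R / 2) x2 w * (v x2 - v w)) =ᶠ[𝓝 w] fun _ => 0 := by
        have : w ∈ (closedBall x2 (R / 2))ᶜ := fun h => hw (closedBall_subset_ball (by linarith) h)
        filter_upwards [isClosed_closedBall.isOpen_compl.mem_nhds this] with z hz
        rw [kern_zero hr (fun h => hz (ball_subset_closedBall h)), zero_mul]
      exact continuousAt_const.congr h1.symm
  have hzero : ∀ w ∈ ball x2 (R / 2), v w = v x2 := by
    have h0 : (fun w => kern (R / 2) x2 w * (v x2 - v w)) = fun _ => 0 := by
      have hi : Integrable (fun w => kern (R / 2) x2 w * (v x2 - v w)) :=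
        integrable_kern_mul hr (by linarith) hgc
      have h1 := (integral_eq_zero_iff_of_nonneg hnn hi).1 (le_antisymm hint (integral_nonneg hnn))
      exact (Continuous.ae_eq_iff_eq volume hcont continuous_const).1 h1
    intro w hw
    have := congrFun h0 w
    have hk := kern_pos hr hw
    simp only [mul_eq_zero] at this
    rcases this with h | h
    · exact absurd h hk.ne'
    · linarith
  -- a farther maximizer
  obtain ⟨d, hd1, hd2⟩ : ∃ d : ES N, ‖d‖ = 1 ∧ ‖x2 + (R / 4) • d‖ > ‖x2‖ := by
    by_cases h0 : x2 = 0
    · refine ⟨EuclideanSpace.single ⟨0, hN⟩ 1, by simp, ?_⟩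
      rw [h0]; simp [norm_smul, hR.ne']
    · have hn : 0 < ‖x2‖ := norm_pos_iff.2 h0
      refine ⟨‖x2‖⁻¹ • x2, by rw [norm_smul]; simp [hn.ne'], ?_⟩
      have : x2 + (R / 4) • ‖x2‖⁻¹ • x2 = (1 + R / 4 * ‖x2‖⁻¹) • x2 := by
        rw [add_smul, one_smul, mul_smul]
      rw [this, norm_smul, Real.norm_of_nonneg (by positivity)]
      have : 0 < R / 4 * ‖x2‖⁻¹ := by positivity
      nlinarith
  have hmem : x2 + (R / 4) • d ∈ ball x2 (R / 2) := by
    rw [mem_ball, dist_eq_norm, add_sub_cancel_left, norm_smul, hd1,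
      Real.norm_of_nonneg (by positivity)]
    linarith
  have hv3 := hzero _ hmem
  have h3D : x2 + (R / 4) • d ∈ D := hball (ball_subset_ball (by linarith) hmem)
  have h3 : x2 + (R / 4) • d ∈ Kc2 := ⟨⟨h3D, by rw [hv3]; exact hx2.1.2⟩, by rw [hv3, hvx2]⟩
  have := hmax2 h3
  simp only [mem_ofPred_eq] at this
  linarith

/-! ## Integration by parts -/

lemma ibp {a φ : ES N → ℝ} (ha : ContDiff ℝ (⊤ : ℕ∞) a) (hφ : ContDiff ℝ (⊤ : ℕ∞) φ)
    (hc : HasCompactSupport φ) : ∫ x, a x * lap φ x = ∫ x, lap a x * φ x := by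
  have hD : ∀ {b : ES N → ℝ}, ContDiff ℝ (⊤ : ℕ∞) b → ∀ i : Fin N,
      ContDiff ℝ (⊤ : ℕ∞) (fun y => fderiv ℝ b y (EuclideanSpace.single i 1)) := by
    intro b hb i
    exact (hb.fderiv_right (m := (⊤ : ℕ∞)) (by simp)).clm_apply contDiff_const
  have hS : ∀ {b : ES N → ℝ}, HasCompactSupport b → ∀ i : Fin N,
      HasCompactSupport (fun y => fderiv ℝ b y (EuclideanSpace.single i 1)) := by
    intro b hb i
    exact hb.fderiv_apply ℝ _
  have hI : ∀ {b c : ES N → ℝ}, ContDiff ℝ (⊤ : ℕ∞) b → ContDiff ℝ (⊤ : ℕ∞) c → HasCompactSupport c →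
      Integrable (fun x => b x * c x) := by
    intro b c hb hc hs
    exact (hb.continuous.mul hc.continuous).integrable_of_hasCompactSupport hs.mul_left
  have hne : ((⊤ : ℕ∞) : WithTop ℕ∞) ≠ 0 := by simp
  unfold lap
  simp_rw [Finset.mul_sum, Finset.sum_mul]
  rw [integral_finsetSum, integral_finsetSum]
  · apply Finset.sum_congr rfl
    intro i _
    have h1 := hD hφ i
    have h2 := hD ha i
    have e1 := integral_mul_fderiv_eq_neg_fderiv_mul_of_integrable (μ := (volume : Measure (ES N)))
      (v := EuclideanSpace.single i 1)
      (f := a) (g := fun y => fderiv ℝ φ y (EuclideanSpace.single i 1))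
      (hI h2 h1 (hS hc i)) (hI ha (hD h1 i) (hS (hS hc i) i)) (hI ha h1 (hS hc i))
      (fun x _ => ha.differentiable hne x) (fun x _ => h1.differentiable hne x)
    have e2 := integral_mul_fderiv_eq_neg_fderiv_mul_of_integrable (μ := (volume : Measure (ES N)))
      (v := EuclideanSpace.single i 1)
      (f := fun y => fderiv ℝ a y (EuclideanSpace.single i 1)) (g := φ)
      (hI (hD h2 i) hφ hc) (hI h2 h1 (hS hc i)) (hI h2 hφ hc)
      (fun x _ => h2.differentiable hne x) (fun x _ => hφ.differentiable hne x)
    rw [e1, e2, neg_neg]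
  · intro i _
    exact hI (hD (hD ha i) i) hφ hc
  · intro i _
    exact hI ha (hD (hD hφ i) i) (hS (hS hc i) i)

/-- the exponential barrier is sub-mean away from its centre -/
lemma barrier_sub {k ρ : ℝ} (hk : 0 < k) (hρ : N ≤ 2 * k * ρ ^ 2) (hρ0 : 0 ≤ ρ) (e : ES N) :
    SubM ((ball e ρ)ᶜ) (fun w => Real.exp (-k * ‖w - e‖ ^ 2)) := by
  have hcd : ContDiff ℝ (⊤ : ℕ∞) (fun s : ℝ => Real.exp (-k * s)) := by fun_prop
  have hcd2 : ContDiff ℝ (⊤ : ℕ∞) (fun w : ES N => Real.exp (-k * ‖w - e‖ ^ 2)) :=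
    hcd.comp ((contDiff_id.sub contDiff_const).norm_sq ℝ)
  have hlap : ∀ w, lap (fun w : ES N => Real.exp (-k * ‖w - e‖ ^ 2)) w
      = Real.exp (-k * ‖w - e‖ ^ 2) * (2 * k * (2 * k * ‖w - e‖ ^ 2 - N)) := by
    intro w
    have hd1 : deriv (fun s : ℝ => Real.exp (-k * s)) = fun s => -k * Real.exp (-k * s) := by
      funext s
      have := ((hasDerivAt_id s).const_mul (-k)).exp
      simp only [id] at this
      rw [this.deriv]; ring
    have hd2 : deriv (fun s : ℝ => -k * Real.exp (-k * s)) = fun s => k ^ 2 * Real.exp (-k * s) := by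
      funext s
      have := (((hasDerivAt_id s).const_mul (-k)).exp).const_mul (-k)
      simp only [id] at this
      rw [this.deriv]; ring
    rw [lap_radial _ hcd, hd1, hd2]
    ring
  have hweak : Weak univ (fun w : ES N => Real.exp (-k * ‖w - e‖ ^ 2))
      (lap (fun w : ES N => Real.exp (-k * ‖w - e‖ ^ 2))) := by
    refine ⟨hcd2.continuous.continuousOn, fun φ hφ => ?_⟩
    simp only [Measure.restrict_univ]
    exact ibp hcd2 hφ.1 hφ.2.1
  refine ⟨hcd2.continuous.continuousOn, fun x R r hr hrR hb => ?_⟩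
  refine weak_sub hweak hr hrR (subset_univ _) ?_
  intro w hw
  rw [hlap]
  have h1 := hb hw
  simp only [mem_compl_iff, mem_ball, not_lt, dist_eq_norm] at h1
  have h2 : ρ ^ 2 ≤ ‖w - e‖ ^ 2 := by gcongr
  have h3 : 0 ≤ 2 * k * ‖w - e‖ ^ 2 - N := by nlinarith
  positivity

end Part3

section Part4

variable {N : ℕ}

/-! ## Boundary decay -/

lemma decay_ball (hN : 0 < N) {Ω : Set (ES N)} (hΩ : IsOpen Ω) {e0 x : ES N} {ρ R1 R2 S : ℝ}
    (hρ : 0 < ρ) (hR : R2 < R1) (hρR : ρ < R1) (hR2 : 0 ≤ R2) (hdis : ∀ w ∈ Ω, w ∉ ball e0 ρ)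
    {v : ES N → ℝ}
    (hv : SubM (Ω ∩ ball e0 R1) v) (hS : 0 ≤ S) (hvS : ∀ w ∈ Ω ∩ ball e0 R1, v w ≤ S)
    (hbc : ∀ z ∈ frontier Ω ∩ closedBall e0 R1, ∀ ε > 0, ∀ᶠ w in 𝓝[Ω] z, v w ≤ ε)
    (hx : x ∈ Ω) (hxR : ‖x - e0‖ ≤ R2) :
    v x ≤ S * ((Real.exp (-(N / ρ ^ 2) * ρ ^ 2) - Real.exp (-(N / ρ ^ 2) * R2 ^ 2)) /
      (Real.exp (-(N / ρ ^ 2) * ρ ^ 2) - Real.exp (-(N / ρ ^ 2) * R1 ^ 2))) := by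
  set k : ℝ := N / ρ ^ 2 with hk
  have hN' : (0 : ℝ) < N := by exact_mod_cast hN
  have hk0 : 0 < k := by positivity
  set E : ℝ → ℝ := fun s => Real.exp (-k * s ^ 2) with hE
  have hEanti : ∀ s t, 0 ≤ s → s ≤ t → E t ≤ E s := by
    intro s t hs hst
    apply Real.exp_le_exp.2
    have : s ^ 2 ≤ t ^ 2 := by gcongr
    nlinarith
  have hElt : E R1 < E ρ := by
    apply Real.exp_lt_exp.2
    have : ρ ^ 2 < R1 ^ 2 := by gcongr
    nlinarith
  have hden : 0 < E ρ - E R1 := by linarith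
  set c : ℝ := S / (E ρ - E R1) with hc
  have hc0 : 0 ≤ c := by positivity
  set D : Set (ES N) := Ω ∩ ball e0 R1 with hDdef
  have hDo : IsOpen D := hΩ.inter isOpen_ball
  have hbar : SubM D (fun w => Real.exp (-k * ‖w - e0‖ ^ 2)) := by
    refine (barrier_sub hk0 ?_ hρ.le e0).mono fun w hw => hdis w hw.1
    rw [hk]; field_simp; linarith
  have hg : SubM D (fun w => v w + (c * Real.exp (-k * ‖w - e0‖ ^ 2) + (- (c * E ρ)))) :=
    hv.add ((hbar.smul hc0).add (SubM.const _))
  have hcS : c * E ρ - c * E R1 = S := by rw [hc]; field_simp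
  have hmp := max_principle hN hDo (isBounded_ball.subset inter_subset_right) hg ?_ x
    ⟨hx, by rw [mem_ball, dist_eq_norm]; linarith⟩
  · have h1 : E R2 ≤ Real.exp (-k * ‖x - e0‖ ^ 2) := hEanti _ _ (norm_nonneg _) hxR
    have h2 : v x ≤ c * (E ρ - E R2) := by nlinarith
    calc v x ≤ c * (E ρ - E R2) := h2
      _ = _ := by rw [hc]; ring
  · intro z hz ε hε
    have hzc : z ∈ closure D := frontier_subset_closure hz
    have hznD : z ∉ D := by rw [hDo.frontier_eq] at hz; exact hz.2
    have hzR : z ∈ closedBall e0 R1 :=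
      closure_minimal (fun w hw => ball_subset_closedBall hw.2) isClosed_closedBall hzc
    have hbarle : ∀ w ∈ D, Real.exp (-k * ‖w - e0‖ ^ 2) ≤ E ρ := by
      intro w hw
      refine hEanti _ _ hρ.le ?_
      have := hdis w hw.1
      rw [mem_ball, not_lt, dist_eq_norm] at this
      exact this
    by_cases hzΩ : z ∈ Ω
    · have hzs : ‖z - e0‖ = R1 := by
        rw [mem_closedBall, dist_eq_norm] at hzR
        refine le_antisymm hzR ?_
        by_contra! h
        exact hznD ⟨hzΩ, by rw [mem_ball, dist_eq_norm]; exact h⟩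
      have hcont : Continuous fun w : ES N => c * Real.exp (-k * ‖w - e0‖ ^ 2) := by fun_prop
      have hlt : c * Real.exp (-k * ‖z - e0‖ ^ 2) < c * E R1 + ε := by rw [hzs]; simp only [hE]; linarith
      have h1 := (hcont.tendsto z).eventually (gt_mem_nhds hlt)
      filter_upwards [nhdsWithin_le_nhds h1, self_mem_nhdsWithin] with w hw hwD
      have := hvS w hwD
      linarith
    · have hzf : z ∈ frontier Ω := by
        rw [hΩ.frontier_eq]; exact ⟨closure_mono inter_subset_left hzc, hzΩ⟩
      have h1 := nhdsWithin_mono z (inter_subset_left (s := Ω) (t := ball e0 R1)) (hbc z ⟨hzf, hzR⟩ ε hε)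
      filter_upwards [h1, self_mem_nhdsWithin] with w hw hwD
      have := hbarle w hwD
      have hw' : v w ≤ ε := hw
      nlinarith

/-- a local graph chart at `y` -/
structure Chart (Ω : Set (ES N)) (y e : ES N) (ψ : ES N → ℝ) (Λ ε : ℝ) : Prop where
  isOpen : IsOpen Ω
  eps : 0 < ε
  lam : 1 ≤ Λ
  enorm : ‖e‖ = 1
  lip : ∀ x w, |ψ x - ψ w| ≤ Λ * ‖x - w‖
  shift : ∀ x s, ψ (x + s • e) = ψ x + s
  mem : ∀ x ∈ ball y ε, (x ∈ Ω ↔ 0 < ψ x)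
  zero : ψ y = 0

/-- decay factor -/
def theta (N : ℕ) (Λ : ℝ) : ℝ :=
  (Real.exp (-(N : ℝ)) - Real.exp (-(4 * N * Λ ^ 2))) /
    (Real.exp (-(N : ℝ)) - Real.exp (-(16 * N * Λ ^ 2)))

lemma theta_mem (hN : 0 < N) {Λ : ℝ} (hΛ : 1 ≤ Λ) : 0 < theta N Λ ∧ theta N Λ < 1 := by
  have hN' : (0 : ℝ) < N := by exact_mod_cast hN
  have hL : 1 ≤ Λ ^ 2 := one_le_pow₀ hΛ
  have h1 : Real.exp (-(4 * N * Λ ^ 2)) < Real.exp (-(N : ℝ)) := Real.exp_lt_exp.2 (by nlinarith)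
  have h2 : Real.exp (-(16 * N * Λ ^ 2)) < Real.exp (-(4 * N * Λ ^ 2)) :=
    Real.exp_lt_exp.2 (by nlinarith)
  unfold theta
  constructor
  · apply div_pos <;> linarith
  · rw [div_lt_one (by linarith)]; linarith

lemma decay (hN : 0 < N) {Ω : Set (ES N)} {y e : ES N} {ψ : ES N → ℝ} {Λ ε : ℝ}
    (ch : Chart Ω y e ψ Λ ε) {x : ES N} {h S : ℝ} (hx : x ∈ Ω) (hh : 0 < h) (hψ : ψ x ≤ h)
    (hball : ball x (7 * h) ⊆ ball y ε) {v : ES N → ℝ} (hv : SubM (Ω ∩ ball x (7 * h)) v)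
    (hbc : ∀ z ∈ frontier Ω ∩ ball x (7 * h), ∀ ε > 0, ∀ᶠ w in 𝓝[Ω] z, v w ≤ ε)
    (hS : 0 ≤ S) (hvS : ∀ w ∈ Ω ∩ ball x (7 * h), v w ≤ S) : v x ≤ theta N Λ * S := by
  have hΛ := ch.lam
  have hΛ0 : 0 < Λ := by linarith
  set e0 := x + (-(2 * h)) • e with he0
  have hxe : ‖x - e0‖ = 2 * h := by
    rw [he0, sub_add_cancel_left, norm_neg, norm_smul, ch.enorm, norm_neg,
      Real.norm_of_nonneg (by positivity), mul_one]
  have hsub : closedBall e0 (4 * h) ⊆ ball x (7 * h) := by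
    intro w hw
    rw [mem_closedBall, dist_eq_norm] at hw
    rw [mem_ball, dist_eq_norm]
    have : ‖w - x‖ ≤ ‖w - e0‖ + ‖e0 - x‖ := norm_sub_le_norm_sub_add_norm_sub _ _ _
    rw [norm_sub_rev e0 x] at this
    linarith
  have hsub' : ball e0 (4 * h) ⊆ ball x (7 * h) := ball_subset_closedBall.trans hsub
  have hρle : h / Λ ≤ h := div_le_self hh.le hΛ
  have := decay_ball hN ch.isOpen (e0 := e0) (x := x) (ρ := h / Λ) (R1 := 4 * h) (R2 := 2 * h)
    (S := S) (v := v) (by positivity) (by linarith) (by linarith) (by positivity) ?_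
    (hv.mono (inter_subset_inter_right _ hsub')) hS
    (fun w hw => hvS w ⟨hw.1, hsub' hw.2⟩) (fun z hz => hbc z ⟨hz.1, hsub hz.2⟩) hx hxe.le
  · have e1 : -((N : ℝ) / (h / Λ) ^ 2) * (h / Λ) ^ 2 = -(N : ℝ) := by field_simp
    have e2 : -((N : ℝ) / (h / Λ) ^ 2) * (2 * h) ^ 2 = -(4 * N * Λ ^ 2) := by field_simp; ring
    have e3 : -((N : ℝ) / (h / Λ) ^ 2) * (4 * h) ^ 2 = -(16 * N * Λ ^ 2) := by field_simp; ring
    rw [e1, e2, e3, mul_comm] at this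
    exact this
  · intro w hw hwb
    have hw2 : w ∈ ball x (7 * h) := hsub' (ball_subset_ball (by linarith) hwb)
    have h1 := (ch.mem w (hball hw2)).1 hw
    have h2 := ch.lip w e0
    have h3 : ψ e0 = ψ x + -(2 * h) := ch.shift x _
    rw [mem_ball, dist_eq_norm, lt_div_iff₀ hΛ0] at hwb
    have := (abs_le.1 h2).2
    nlinarith

lemma strip_decay (hN : 0 < N) {Ω : Set (ES N)} {y e : ES N} {ψ : ES N → ℝ} {Λ ε : ℝ}
    (ch : Chart Ω y e ψ Λ ε) {p : ES N} {h S R : ℝ} (hh : 0 < h)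
    (hball : ball p R ⊆ ball y ε) {v : ES N → ℝ} (hv : SubM (Ω ∩ ball p R) v)
    (hbc : ∀ z ∈ frontier Ω ∩ ball p R, ∀ ε > 0, ∀ᶠ w in 𝓝[Ω] z, v w ≤ ε)
    (hS : 0 ≤ S) (hvS : ∀ w ∈ Ω ∩ ball p R, v w ≤ S)
    (hneg : ∀ w ∈ Ω ∩ ball p R, h < ψ w → v w ≤ 0) (j : ℕ) :
    ∀ w ∈ Ω ∩ ball p (R - 7 * h * j), v w ≤ theta N Λ ^ j * S := by
  have hθ := theta_mem hN ch.lam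
  induction j with
  | zero => intro w hw; simpa using hvS w (by simpa using hw)
  | succ j ih =>
    intro w hw
    have hwR : w ∈ ball p R := by
      refine ball_subset_ball ?_ hw.2
      have : (0:ℝ) ≤ ((j + 1 : ℕ) : ℝ) := by positivity
      nlinarith
    have hpos : 0 ≤ theta N Λ ^ (j + 1) * S := by have := hθ.1; positivity
    by_cases hψ : h < ψ w
    · exact (hneg w ⟨hw.1, hwR⟩ hψ).trans hpos
    · push Not at hψ
      have hs1 : ball w (7 * h) ⊆ ball p (R - 7 * h * j) := by
        apply ball_subset_ball'
        have := mem_ball.1 hw.2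
        push_cast at this
        linarith
      have hs2 : ball w (7 * h) ⊆ ball p R := hs1.trans (ball_subset_ball (by
        have : (0:ℝ) ≤ (j : ℝ) := by positivity
        nlinarith))
      have := decay hN ch (v := v) (S := theta N Λ ^ j * S) hw.1 hh hψ (hs2.trans hball)
        (hv.mono (inter_subset_inter_right _ hs2)) (fun z hz => hbc z ⟨hz.1, hs2 hz.2⟩)
        (by have := hθ.1; positivity) (fun z hz => ih z ⟨hz.1, hs1 hz.2⟩)
      rw [pow_succ]; linarith

/-! ## Interior estimates -/

/-- constant of the lower mean bound -/
def cW (N : ℕ) (κ : ℝ) : ℝ :=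
  κ ^ N * volume.real (ball (0 : ES N) 1) * qf (1 / 4) / mass N

lemma ball_real_pos : 0 < volume.real (ball (0 : ES N) 1) :=
  ENNReal.toReal_pos (measure_ball_pos _ _ one_pos).ne' measure_ball_lt_top.ne

lemma cW_pos {κ : ℝ} (hκ : 0 < κ) : 0 < cW N κ := by
  unfold cW
  have h1 := mass_pos N
  have h2 := ball_real_pos (N := N)
  have h3 : 0 < qf (1 / 4) := qf_pos (by norm_num)
  positivity

lemma lower_mean {U : Set (ES N)} {w : ES N → ℝ} (hw : SubM U (fun x => - w x)) {z z' : ES N}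
    {ϱ R κ m b : ℝ} (hκ : 0 < κ) (hϱ : 0 < ϱ) (hR : ϱ < R) (hU : ball z' R ⊆ U)
    (hwb : ∀ x ∈ ball z' ϱ, -b ≤ w x) (hsub : ball z (κ * ϱ) ⊆ ball z' (ϱ / 2))
    (hm : ∀ x ∈ ball z (κ * ϱ), m ≤ w x) (hmb : 0 ≤ m + b) :
    cW N κ * (m + b) ≤ w z' + b := by
  have hm0 := mass_pos N
  have h1 := (hw.add (SubM.const (-b))).2 z' R ϱ hϱ hR hU
  have hwc : ContinuousOn w (ball z' R) := by
    exact (hw.1.neg.mono hU).congr (fun x _ => by simp)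
  have hint : Integrable (fun x => kern ϱ z' x * (w x + b)) :=
    integrable_kern_mul hϱ hR (hwc.add continuousOn_const)
  have h2 : ∫ x, kern ϱ z' x * (w x + b) ≤ mass N * (w z' + b) := by
    have : avg (fun x => -w x + -b) z' ϱ = - ∫ x, kern ϱ z' x * (w x + b) := by
      unfold avg
      rw [← integral_neg]
      congr 1; funext x; ring
    rw [this] at h1
    linarith
  have h3 : ∫ x in ball z (κ * ϱ), kern ϱ z' x * (w x + b) ≤ ∫ x, kern ϱ z' x * (w x + b) := by
    apply setIntegral_le_integral hint
    filter_upwards with x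
    by_cases hx : x ∈ ball z' ϱ
    · exact mul_nonneg (kern_nonneg hϱ _ _) (by linarith [hwb x hx])
    · simp [kern_zero hϱ hx]
  have h4 : ∫ x in ball z (κ * ϱ), (ϱ ^ N)⁻¹ * qf (1 / 4) * (m + b)
      ≤ ∫ x in ball z (κ * ϱ), kern ϱ z' x * (w x + b) := by
    apply setIntegral_mono_on (integrableOn_const measure_ball_lt_top.ne) hint.integrableOn measurableSet_ball
    intro x hx
    have hx' := hsub hx
    rw [mem_ball, dist_eq_norm] at hx'
    have hk : (ϱ ^ N)⁻¹ * qf (1 / 4) ≤ kern ϱ z' x := by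
      unfold kern
      have : ‖x - z'‖ ^ 2 / ϱ ^ 2 ≤ 1 / 4 := by
        rw [div_le_iff₀ (by positivity)]
        have : ‖x - z'‖ ^ 2 ≤ (ϱ / 2) ^ 2 := by gcongr
        linarith
      gcongr
      exact qf_anti this
    have := hm x hx
    exact mul_le_mul hk (by linarith) hmb (kern_nonneg hϱ _ _)
  have hvol : volume.real (ball z (κ * ϱ)) = (κ * ϱ) ^ N * volume.real (ball (0 : ES N) 1) := by
    rw [measureReal_def, measureReal_def, Measure.addHaar_ball_of_pos _ _ (by positivity),
      ENNReal.toReal_mul, ENNReal.toReal_ofReal (by positivity)]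
    simp
  rw [setIntegral_const, smul_eq_mul, hvol] at h4
  have h5 : mass N * (cW N κ * (m + b)) ≤ mass N * (w z' + b) := by
    refine le_trans (le_of_eq ?_) (h4.trans (h3.trans h2))
    unfold cW
    rw [mul_pow]
    field_simp
  exact le_of_mul_le_mul_left h5 hm0

/-- Harnack property -/
def HProp (Ω : Set (ES N)) (u : ES N → ℝ) (H : ℝ) : Prop :=
  ∀ (z z' : ES N) (s : ℝ), 0 < s → ball z s ⊆ Ω → ball z' s ⊆ Ω → ‖z - z'‖ ≤ s / 16 → u z ≤ H * u z'

/-- Harnack constant -/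
def hC (N : ℕ) (a : ℝ) : ℝ := 4 ^ N * qf 0 / qf (1 / 4) * Real.exp (a / 16)

lemma hC_ge (N : ℕ) {a : ℝ} (ha : 0 ≤ a) : 1 ≤ hC N a := by
  unfold hC
  have h3 : 0 < qf (1 / 4) := qf_pos (by norm_num)
  have h4 : qf (1 / 4) ≤ qf 0 := qf_anti (by norm_num)
  have h5 : 1 ≤ Real.exp (a / 16) := Real.one_le_exp (by positivity)
  have h6 : (1 : ℝ) ≤ 4 ^ N := one_le_pow₀ (by norm_num)
  have h7 : 1 ≤ 4 ^ N * qf 0 / qf (1 / 4) := by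
    rw [one_le_div h3]; nlinarith
  nlinarith

lemma kern_compare {r : ℝ} (hr : 0 < r) {z z' : ES N} (h : ‖z - z'‖ ≤ r) (w : ES N) :
    kern r z w ≤ 4 ^ N * qf 0 / qf (1 / 4) * kern (4 * r) z' w := by
  have h3 : 0 < qf (1 / 4) := qf_pos (by norm_num)
  have h0 : 0 ≤ qf 0 := qf_nonneg 0
  by_cases hw : w ∈ ball z r
  · rw [mem_ball, dist_eq_norm] at hw
    have hww : ‖w - z'‖ ≤ 2 * r := by
      have : ‖w - z'‖ ≤ ‖w - z‖ + ‖z - z'‖ := norm_sub_le_norm_sub_add_norm_sub _ _ _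
      linarith
    have h1 : qf (‖w - z‖ ^ 2 / r ^ 2) ≤ qf 0 := qf_anti (by positivity)
    have h2 : qf (1 / 4) ≤ qf (‖w - z'‖ ^ 2 / (4 * r) ^ 2) := by
      apply qf_anti
      rw [div_le_iff₀ (by positivity)]
      have : ‖w - z'‖ ^ 2 ≤ (2 * r) ^ 2 := by gcongr
      linarith
    unfold kern
    calc (r ^ N)⁻¹ * qf (‖w - z‖ ^ 2 / r ^ 2) ≤ (r ^ N)⁻¹ * qf 0 := by gcongr
      _ = 4 ^ N * qf 0 / qf (1 / 4) * (((4 * r) ^ N)⁻¹ * qf (1 / 4)) := by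
        rw [mul_pow]; field_simp
      _ ≤ _ := by gcongr
  · rw [kern_zero hr hw]
    have := kern_nonneg (by positivity : 0 < 4 * r) z' w
    positivity

lemma harnack_step {Ω : Set (ES N)} {V u : ES N → ℝ} {a : ℝ} (ha : 0 ≤ a) (hV : VClass Ω a V)
    (hne : (Ωᶜ).Nonempty) (hu : Weak Ω u (fun x => V x * u x)) (hpos : ∀ x ∈ Ω, 0 < u x) :
    HProp Ω u (hC N a) := by
  intro z z' s hs hz hz' hzz
  have hm0 := mass_pos N
  have hVb : ∀ w ∈ ball z' (s / 2), V w ≤ 4 * a / s ^ 2 := by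
    intro w hw
    have hwΩ : w ∈ Ω := hz' (ball_subset_ball (by linarith) hw)
    have hd : s / 2 ≤ dista Ω w := by
      unfold dista
      rw [le_infDist hne]
      intro q hq
      by_contra! hlt
      apply hq
      apply hz'
      rw [mem_ball] at hw ⊢
      have := dist_triangle q w z'
      rw [dist_comm q w] at this
      linarith
    obtain ⟨h1, h2⟩ := hV.2 w hwΩ
    rw [le_div_iff₀ (by positivity)]
    have : (s / 2) ^ 2 ≤ dista Ω w ^ 2 := by gcongr
    nlinarith
  have h1 : mass N * u z ≤ avg u z (s / 16) :=
    weak_sub hu (by positivity) (by linarith) hz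
      (fun w hw => mul_nonneg (hV.2 w (hz hw)).1 (hpos w (hz hw)).le)
  have hs2 : ball z' (s / 2) ⊆ Ω := (ball_subset_ball (by linarith)).trans hz'
  have h2 : avg u z' (s / 4) ≤ Real.exp (4 * a / s ^ 2 * (s / 4) ^ 2 / 4) * (mass N * u z') :=
    weak_super hu (R := s / 2) (by positivity) (by linarith) hs2 (fun w hw => (hpos w (hs2 hw)).le)
      (fun w hw => mul_nonneg (hV.2 w (hs2 hw)).1 (hpos w (hs2 hw)).le)
      (fun w hw => mul_le_mul_of_nonneg_right (hVb w hw) (hpos w (hs2 hw)).le) (by positivity)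
  have e1 : 4 * a / s ^ 2 * (s / 4) ^ 2 / 4 = a / 16 := by field_simp; ring
  rw [e1] at h2
  have h3 : avg u z (s / 16) ≤ 4 ^ N * qf 0 / qf (1 / 4) * avg u z' (s / 4) := by
    unfold avg
    rw [← integral_const_mul]
    have hi2 : Integrable (fun w => kern (s / 4) z' w * u w) :=
      integrable_kern_mul (R := s / 2) (by positivity) (by linarith) (hu.1.mono hs2)
    have hi1 : Integrable (fun w => kern (s / 16) z w * u w) :=
      integrable_kern_mul (by positivity) (by linarith) (hu.1.mono hz)
    apply integral_mono hi1 (hi2.const_mul _)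
    intro w
    simp only
    by_cases hw : w ∈ Ω
    · have := kern_compare (N := N) (by positivity : 0 < s / 16) hzz w
      have e : 4 * (s / 16) = s / 4 := by ring
      rw [e] at this
      rw [← mul_assoc]
      exact mul_le_mul_of_nonneg_right this (hpos w hw).le
    · rw [kern_zero (by positivity), kern_zero (by positivity)]
      · simp
      · exact fun h => hw (hs2 (ball_subset_ball (by linarith) h))
      · exact fun h => hw (hz (ball_subset_ball (by linarith) h))
  have h3' : 0 < 4 ^ N * qf 0 / qf (1 / 4) := by
    have h3 : 0 < qf (1 / 4) := qf_pos (by norm_num)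
    have h4 : 0 < qf 0 := qf_pos (by norm_num)
    positivity
  have h5 : mass N * u z ≤ mass N * (hC N a * u z') := by
    calc mass N * u z ≤ 4 ^ N * qf 0 / qf (1 / 4) * avg u z' (s / 4) := h1.trans h3
      _ ≤ 4 ^ N * qf 0 / qf (1 / 4) * (Real.exp (a / 16) * (mass N * u z')) := by gcongr
      _ = _ := by unfold hC; ring
  exact le_of_mul_le_mul_left h5 hm0

end Part4

section Part5

variable {N : ℕ}

/-! ## Comparison near the boundary -/

lemma Chart.ball_sub {Ω : Set (ES N)} {y e : ES N} {ψ : ES N → ℝ} {Λ ε : ℝ}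
    (ch : Chart Ω y e ψ Λ ε) {x : ES N} {s : ℝ} (hs : Λ * s ≤ ψ x) (hb : ball x s ⊆ ball y ε) :
    ball x s ⊆ Ω := by
  intro w hw
  rw [ch.mem w (hb hw)]
  have hΛ := ch.lam
  rw [mem_ball, dist_eq_norm] at hw
  have := (abs_le.1 (ch.lip w x)).1
  nlinarith

lemma Chart.dist_shift {Ω : Set (ES N)} {y e : ES N} {ψ : ES N → ℝ} {Λ ε : ℝ}
    (ch : Chart Ω y e ψ Λ ε) (x : ES N) {s : ℝ} (hs : 0 ≤ s) : dist (x + s • e) x = s := by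
  rw [dist_eq_norm, add_sub_cancel_left, norm_smul, ch.enorm, Real.norm_of_nonneg hs, mul_one]

set_option maxHeartbeats 1000000 in
lemma bhp_step (hN : 0 < N) {Ω : Set (ES N)} {y e : ES N} {ψ : ES N → ℝ} {Λ ε : ℝ}
    (ch : Chart Ω y e ψ Λ ε) {c δ : ℝ} {j : ℕ} (hc : 0 < c) (hc1 : c ≤ 1)
    (hcW : c ≤ cW N (1 / (8 * Λ))) (hj : theta N Λ ^ j ≤ c / 2) (hδ : 0 < δ)
    (hδj : 112 * Λ * (j + 1) * δ ≤ 1) {p : ES N} {R m : ℝ} (hR : 0 < R) (hm : 0 < m)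
    (hball : ball p R ⊆ ball y ε) {w : ES N → ℝ} (hw : SubM (Ω ∩ ball p R) (fun x => - w x))
    (hbc : ∀ z ∈ frontier Ω ∩ ball p R, ∀ ε > 0, ∀ᶠ x in 𝓝[Ω] z, - w x ≤ ε)
    (h1 : ∀ z ∈ Ω ∩ ball p R, δ * R ≤ ψ z → 2 / c * m ≤ w z)
    (h2 : ∀ z ∈ Ω ∩ ball p R, -m ≤ w z) :
    (∀ z ∈ Ω ∩ ball p ((1 - 1 / (16 * Λ)) * R), δ * ((1 - 1 / (16 * Λ)) * R) ≤ ψ z →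
      2 / c * (c / 2 * m) ≤ w z) ∧
    (∀ z ∈ Ω ∩ ball p ((1 - 1 / (16 * Λ)) * R), -(c / 2 * m) ≤ w z) := by
  have hΛ := ch.lam
  have hΛ0 : 0 < Λ := by linarith
  set τ : ℝ := 1 / (16 * Λ) with hτ
  have hτ0 : 0 < τ := by positivity
  have hτΛ : τ * Λ = 1 / 16 := by rw [hτ]; field_simp
  have hτ1 : τ ≤ 1 / 16 := by nlinarith
  have hj0 : (0 : ℝ) ≤ j := by positivity
  have hδτ : 7 * δ * (j + 1) ≤ τ := by
    rw [hτ, le_div_iff₀ (by positivity)]; nlinarith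
  have hδ16 : 7 * δ ≤ τ := by nlinarith
  set H : ℝ := δ * R with hH
  have hH0 : 0 < H := by positivity
  have hHR : 7 * H ≤ τ * R := by rw [hH]; nlinarith
  constructor
  · intro z' hz' hψ'
    have hz'R : z' ∈ ball p R := ball_subset_ball (by nlinarith) hz'.2
    have hM : 2 / c * (c / 2 * m) = m := by field_simp
    rw [hM]
    by_cases hHψ : H ≤ ψ z'
    · have := h1 z' ⟨hz'.1, hz'R⟩ hHψ
      have h3 : 1 ≤ 2 / c := by rw [le_div_iff₀ hc]; linarith
      nlinarith
    · push Not at hHψ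
      have hψ2 : (1 - τ) * H ≤ ψ z' := by rw [hH]; linarith
      set ϱ : ℝ := 8 * τ * H with hϱ
      set R' : ℝ := 15 * τ * H with hR'
      have hϱ0 : 0 < ϱ := by positivity
      have hsubR : ball z' R' ⊆ ball p R := by
        apply ball_subset_ball'
        have := mem_ball.1 hz'.2
        have : 15 * τ * H ≤ τ * R := by nlinarith
        nlinarith
      have hsub : ball z' R' ⊆ Ω := by
        apply ch.ball_sub _ (hsubR.trans hball)
        calc Λ * R' = 15 * (τ * Λ) * H := by rw [hR']; ring
          _ ≤ (1 - τ) * H := by rw [hτΛ]; nlinarith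
          _ ≤ _ := hψ2
      set z := z' + (2 * τ * H) • e with hz
      have hdz : dist z z' = 2 * τ * H := ch.dist_shift z' (by positivity)
      have hκ : 1 / (8 * Λ) = 2 * τ := by rw [hτ]; field_simp; norm_num
      have hκϱ : 2 * τ * ϱ ≤ τ * H := by rw [hϱ]; nlinarith [mul_pos hτ0 hH0]
      have hsz : ball z (1 / (8 * Λ) * ϱ) ⊆ ball z' (ϱ / 2) := by
        apply ball_subset_ball'
        rw [hdz, hκ, hϱ] at *
        nlinarith [mul_pos hτ0 hH0]
      have hsz' : ball z' ϱ ⊆ ball z' R' := ball_subset_ball (by rw [hϱ, hR']; nlinarith [mul_pos hτ0 hH0])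
      have := lower_mean (κ := 1 / (8 * Λ)) (ϱ := ϱ) (R := R') (z := z) (z' := z')
        (m := 2 / c * m) (b := m) hw (by positivity) hϱ0 (by rw [hϱ, hR']; nlinarith [mul_pos hτ0 hH0])
        (subset_inter hsub hsubR) (fun x hx => h2 x ⟨hsub (hsz' hx), hsubR (hsz' hx)⟩) hsz ?_ (by positivity)
      · have h4 : c * (2 / c * m + m) ≤ cW N (1 / (8 * Λ)) * (2 / c * m + m) := by gcongr
        have h5 : c * (2 / c * m + m) = 2 * m + c * m := by field_simp
        nlinarith
      · intro x hx
        have hx' : x ∈ ball z' R' := hsz' (ball_subset_ball (by linarith) (hsz hx))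
        refine h1 x ⟨hsub hx', hsubR hx'⟩ ?_
        have h5 := (abs_le.1 (ch.lip x z)).1
        have h6 : ψ z = ψ z' + 2 * τ * H := ch.shift _ _
        rw [mem_ball, dist_eq_norm, hκ] at hx
        have h7 : Λ * ‖x - z‖ ≤ τ * H := by
          calc Λ * ‖x - z‖ ≤ Λ * (2 * τ * ϱ) := by gcongr
            _ = 16 * (τ * Λ) * (τ * H) := by rw [hϱ]; ring
            _ = _ := by rw [hτΛ]; ring
        change H ≤ ψ x
        linarith
  · intro z hz
    have := strip_decay hN ch (v := fun x => - w x) (S := m) hH0 hball hw hbc hm.le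
      (fun x hx => by linarith [h2 x hx]) (fun x hx hψ => by
        have := h1 x hx hψ.le
        have : 0 < 2 / c * m := by positivity
        linarith) j z ⟨hz.1, ball_subset_ball ?_ hz.2⟩
    · nlinarith
    · have : 7 * H * j ≤ τ * R := by
        have : 7 * δ * j * R ≤ τ * R := by
          apply mul_le_mul_of_nonneg_right _ hR.le
          linarith
        rw [hH]; linarith
      linarith

set_option maxHeartbeats 1000000 in
lemma bhp (hN : 0 < N) {Λ : ℝ} (hΛ : 1 ≤ Λ) : ∃ δ M : ℝ, 0 < δ ∧ δ ≤ 1 / 8 ∧ 0 < M ∧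
    ∀ (Ω : Set (ES N)) (y e : ES N) (ψ : ES N → ℝ) (ε : ℝ), Chart Ω y e ψ Λ ε →
    ∀ (p : ES N) (R : ℝ) (w : ES N → ℝ), 0 < R → ψ p = 0 → ball p R ⊆ ball y ε →
      SubM (Ω ∩ ball p R) (fun x => - w x) →
      (∀ z ∈ frontier Ω ∩ ball p R, ∀ ε > 0, ∀ᶠ x in 𝓝[Ω] z, - w x ≤ ε) →
      (∀ z ∈ Ω ∩ ball p R, δ * R ≤ ψ z → M ≤ w z) →
      (∀ z ∈ Ω ∩ ball p R, -1 ≤ w z) → ∀ s, 0 < s → s < R → 0 ≤ w (p + s • e) := by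
  have hΛ0 : 0 < Λ := by linarith
  have hθ := theta_mem hN hΛ
  set c : ℝ := min 1 (cW N (1 / (8 * Λ))) with hc
  have hc0 : 0 < c := lt_min one_pos (cW_pos (by positivity))
  obtain ⟨j, hj⟩ := exists_pow_lt_of_lt_one (show 0 < c / 2 by positivity) hθ.2
  set δ : ℝ := 1 / (112 * Λ * (j + 1)) with hδ
  have hδ0 : 0 < δ := by positivity
  have hδj : 112 * Λ * (j + 1) * δ ≤ 1 := by rw [hδ]; field_simp; exact le_refl _
  have hj0 : (0 : ℝ) ≤ j := by positivity
  have hδ8 : δ ≤ 1 / 8 := by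
    have : 112 ≤ 112 * Λ * (j + 1) := by nlinarith [mul_nonneg hΛ0.le hj0]
    rw [hδ]
    exact one_div_le_one_div_of_le (by norm_num) (by linarith)
  refine ⟨δ, 2 / c, hδ0, hδ8, by positivity, ?_⟩
  intro Ω y e ψ ε ch p R w hR hp hball hw hbc h1 h2 s hs hsR
  set lam : ℝ := 1 - 1 / (16 * Λ) with hlam
  have hτ0 : 0 < 1 / (16 * Λ) := by positivity
  have hτ1 : 1 / (16 * Λ) ≤ 1 / 16 := one_div_le_one_div_of_le (by norm_num) (by linarith)
  have hl0 : 0 < lam := by linarith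
  have hl1 : lam < 1 := by linarith
  have key : ∀ k : ℕ, (∀ z ∈ Ω ∩ ball p (lam ^ k * R), δ * (lam ^ k * R) ≤ ψ z →
      2 / c * (c / 2) ^ k ≤ w z) ∧ (∀ z ∈ Ω ∩ ball p (lam ^ k * R), -((c / 2) ^ k) ≤ w z) := by
    intro k
    induction k with
    | zero => simpa using ⟨fun z h h' => h1 z ⟨h, ‹_›⟩, fun z h h' => h2 z ⟨h, h'⟩⟩
    | succ k ih =>
      have hRk : 0 < lam ^ k * R := by positivity
      have hsub : ball p (lam ^ k * R) ⊆ ball p R := by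
        apply ball_subset_ball
        have := pow_le_one₀ hl0.le hl1.le (n := k)
        nlinarith
      have := bhp_step hN ch hc0 (min_le_left _ _) (min_le_right _ _) hj.le hδ0 hδj hRk
        (m := (c / 2) ^ k) (by positivity) (hsub.trans hball)
        (hw.mono (inter_subset_inter_right _ hsub)) (fun z hz => hbc z ⟨hz.1, hsub hz.2⟩)
        ih.1 ih.2
      rw [pow_succ' (c / 2), pow_succ' lam, mul_assoc lam]
      exact this
  have hψ : ψ (p + s • e) = s := by rw [ch.shift, hp, zero_add]
  have hd : dist (p + s • e) p = s := ch.dist_shift p hs.le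
  have hΩ : p + s • e ∈ Ω := by
    rw [ch.mem _ (hball (by rw [mem_ball, hd]; exact hsR)), hψ]; exact hs
  have fin : ∀ k : ℕ, s < lam ^ k * R → δ * (lam ^ k * R) ≤ s → 0 ≤ w (p + s • e) := by
    intro k hk hk'
    have := (key k).1 (p + s • e) ⟨hΩ, by rw [mem_ball, hd]; exact hk⟩ (by rw [hψ]; exact hk')
    have h0 : 0 < 2 / c * (c / 2) ^ k := by positivity
    linarith
  obtain ⟨n, hn1, hn2⟩ := exists_nat_pow_near_of_lt_one (x := s / R) (y := lam) (by positivity)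
    (by rw [div_le_one hR]; exact hsR.le) hl0 hl1
  rw [lt_div_iff₀ hR] at hn1
  rw [div_le_iff₀ hR] at hn2
  cases n with
  | zero =>
    refine fin 0 (by simpa using hsR) ?_
    simp only [zero_add, pow_one, pow_zero, one_mul] at hn1 ⊢
    nlinarith
  | succ n =>
    have hRn : 0 < lam ^ n * R := by positivity
    refine fin n ?_ ?_
    · rw [pow_succ] at hn2
      nlinarith
    · have e1 : lam ^ (n + 1 + 1) * R = lam ^ 2 * (lam ^ n * R) := by ring
      rw [e1] at hn1
      have h3 : δ ≤ lam ^ 2 := by nlinarith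
      have h4 : δ * (lam ^ n * R) ≤ lam ^ 2 * (lam ^ n * R) := by gcongr
      linarith

end Part5

section Part6

variable {N : ℕ}

/-! ## Harnack chains -/

lemma chain_seg {Ω : Set (ES N)} {u : ES N → ℝ} {H : ℝ} (hu : HProp Ω u H) (hH : 1 ≤ H)
    {z1 z2 : ES N} {s : ℝ} (hs : 0 < s) {n : ℕ} (hn : 0 < n)
    (hb : ∀ τ : ℝ, 0 ≤ τ → τ ≤ 1 → ball (z1 + τ • (z2 - z1)) s ⊆ Ω)
    (hd : ‖z2 - z1‖ ≤ n * (s / 16)) : u z1 ≤ H ^ n * u z2 := by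
  have hn0 : (0 : ℝ) < n := by exact_mod_cast hn
  have key : ∀ k : ℕ, k ≤ n → u z1 ≤ H ^ k * u (z1 + ((k : ℝ) / n) • (z2 - z1)) := by
    intro k
    induction k with
    | zero => intro _; simp
    | succ k ih =>
      intro hk
      refine (ih (by omega)).trans ?_
      rw [pow_succ, mul_assoc]
      apply mul_le_mul_of_nonneg_left _ (by positivity)
      have hk' : (k : ℝ) + 1 ≤ n := by exact_mod_cast hk
      apply hu _ _ s hs
      · apply hb _ (by positivity)
        rw [div_le_one hn0]; linarith
      · apply hb _ (by positivity)
        rw [div_le_one hn0]; push_cast; linarith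
      · have e1 : z1 + ((k : ℝ) / n) • (z2 - z1) - (z1 + (((k + 1 : ℕ) : ℝ) / n) • (z2 - z1))
            = (-(1 / n : ℝ)) • (z2 - z1) := by
          rw [add_sub_add_left_eq_sub, ← sub_smul]
          congr 1
          push_cast
          ring
        rw [e1, norm_smul, norm_neg, Real.norm_of_nonneg (by positivity), one_div, inv_mul_le_iff₀ hn0]
        exact hd
  have := key n le_rfl
  rwa [div_self hn0.ne', one_smul, add_sub_cancel] at this

set_option maxHeartbeats 1000000 in
lemma chain {Λ H σ A : ℝ} (hΛ : 1 ≤ Λ) (hH : 1 ≤ H) (hσ : 0 < σ) (hA : 0 < A) :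
    ∃ C B : ℝ, 1 ≤ C ∧ 0 < B ∧ ∀ (Ω : Set (ES N)) (y e : ES N) (ψ : ES N → ℝ) (ε : ℝ) (u : ES N → ℝ),
      Chart Ω y e ψ Λ ε → HProp Ω u H → ∀ r, 0 < r → B * r ≤ ε → ∀ z1 z2,
      z1 ∈ ball y (A * r) → z2 ∈ ball y (A * r) → σ * r ≤ ψ z1 → σ * r ≤ ψ z2 → u z1 ≤ C * u z2 := by
  have hΛ0 : 0 < Λ := by linarith
  set K : ℝ := Λ * (2 * A) with hK
  have hK0 : 0 < K := by positivity
  obtain ⟨n, hn⟩ := exists_nat_ge (16 * Λ * (K + 2 * A) / σ)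
  rw [div_le_iff₀ hσ] at hn
  refine ⟨H ^ (n + 1) * H ^ (n + 1) * H ^ (n + 1), A + K + σ, ?_, by positivity, ?_⟩
  · have := one_le_pow₀ hH (n := n + 1)
    nlinarith [mul_le_mul this this zero_le_one (by linarith)]
  intro Ω y e ψ ε u ch hu r hr hB z1 z2 hz1 hz2 hψ1 hψ2
  have hz1' := hz1
  have hz2' := hz2
  rw [mem_ball] at hz1' hz2'
  set s : ℝ := σ * r / Λ with hs
  have hs0 : 0 < s := by positivity
  have hsΛ : Λ * s = σ * r := by rw [hs]; field_simp
  have hsσ : s ≤ σ * r := by rw [hs]; exact div_le_self (by positivity) hΛ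
  have hnn : (K + 2 * A) * r ≤ ((n + 1 : ℕ) : ℝ) * (s / 16) := by
    have h1 : 16 * Λ * ((K + 2 * A) * r) ≤ 16 * Λ * (((n + 1 : ℕ) : ℝ) * (s / 16)) := by
      calc 16 * Λ * ((K + 2 * A) * r) = (16 * Λ * (K + 2 * A)) * r := by ring
        _ ≤ (n * σ) * r := by gcongr
        _ ≤ ((n + 1 : ℕ) : ℝ) * (Λ * s) := by rw [hsΛ]; push_cast; nlinarith [mul_pos hσ hr]
        _ = _ := by ring
    exact le_of_mul_le_mul_left h1 (by positivity)
  -- balls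
  have hball : ∀ x : ES N, dist x y ≤ (A + K) * r → σ * r ≤ ψ x → ball x s ⊆ Ω := by
    intro x hx hψ
    apply ch.ball_sub (by rw [hsΛ]; exact hψ)
    apply ball_subset_ball'
    nlinarith
  have hvert : ∀ z : ES N, dist z y < A * r → σ * r ≤ ψ z → ∀ τ : ℝ, 0 ≤ τ → τ ≤ 1 →
      ball (z + (τ * (K * r)) • e) s ⊆ Ω := by
    intro z hz hψ τ h0 h1
    have hKr : 0 < K * r := by positivity
    apply hball
    · have h2 := ch.dist_shift z (s := τ * (K * r)) (by positivity)
      have h3 := dist_triangle (z + (τ * (K * r)) • e) z y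
      nlinarith
    · rw [ch.shift]
      have : 0 ≤ τ * (K * r) := by positivity
      linarith
  set w1 := z1 + (K * r) • e with hw1
  set w2 := z2 + (K * r) • e with hw2
  have hKr : 0 < K * r := by positivity
  have hAr : 0 < A * r := by positivity
  have hnorm : ∀ z : ES N, ‖z + (K * r) • e - z‖ = K * r := fun z => by
    rw [← dist_eq_norm]; exact ch.dist_shift z hKr.le
  have s1 : u z1 ≤ H ^ (n + 1) * u w1 := by
    apply chain_seg hu hH hs0 (by omega) _ _
    · intro τ h0 h1
      rw [hw1, add_sub_cancel_left, smul_smul]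
      exact hvert z1 hz1' hψ1 τ h0 h1
    · rw [hw1, hnorm]; nlinarith
  have s3 : u w2 ≤ H ^ (n + 1) * u z2 := by
    apply chain_seg hu hH hs0 (by omega) _ _
    · intro τ h0 h1
      have e1 : w2 + τ • (z2 - w2) = z2 + ((1 - τ) * (K * r)) • e := by
        rw [hw2]
        module
      rw [e1]
      exact hvert z2 hz2' hψ2 (1 - τ) (by linarith) (by linarith)
    · rw [norm_sub_rev, hw2, hnorm]; nlinarith
  have hzz : ‖z2 - z1‖ ≤ 2 * A * r := by
    rw [← dist_eq_norm]
    have := dist_triangle_right z2 z1 y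
    linarith
  have s2 : u w1 ≤ H ^ (n + 1) * u w2 := by
    have e0 : w2 - w1 = z2 - z1 := by rw [hw1, hw2]; abel
    apply chain_seg hu hH hs0 (by omega) _ _
    · intro τ h0 h1
      rw [e0]
      have e1 : w1 + τ • (z2 - z1) = (z1 + τ • (z2 - z1)) + (K * r) • e := by rw [hw1]; abel
      rw [e1]
      have hn : ‖τ • (z2 - z1)‖ ≤ ‖z2 - z1‖ := by
        rw [norm_smul, Real.norm_of_nonneg h0]
        nlinarith [norm_nonneg (z2 - z1)]
      apply hball
      · have h3 := dist_triangle (z1 + τ • (z2 - z1) + (K * r) • e) (z1 + τ • (z2 - z1)) y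
        rw [ch.dist_shift _ hKr.le] at h3
        have h4 : z1 + τ • (z2 - z1) ∈ ball y (A * r) := by
          have := (convex_ball y (A * r)).add_smul_sub_mem hz1 hz2 ⟨h0, h1⟩
          exact this
        rw [mem_ball] at h4
        nlinarith
      · rw [ch.shift]
        have h5 := (abs_le.1 (ch.lip (z1 + τ • (z2 - z1)) z1)).1
        rw [add_sub_cancel_left] at h5
        have h6 : Λ * ‖τ • (z2 - z1)‖ ≤ Λ * (2 * A * r) := by gcongr; linarith
        rw [hK]
        linarith
    · rw [e0]; nlinarith
  have hHn : 0 < H ^ (n + 1) := by positivity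
  calc u z1 ≤ H ^ (n + 1) * u w1 := s1
    _ ≤ H ^ (n + 1) * (H ^ (n + 1) * u w2) := by gcongr
    _ ≤ H ^ (n + 1) * (H ^ (n + 1) * (H ^ (n + 1) * u z2)) := by gcongr
    _ = _ := by ring

set_option maxHeartbeats 1000000 in
lemma poly {Λ H κ A : ℝ} (hΛ : 1 ≤ Λ) (hH : 1 ≤ H) (hκ : 0 < κ) (hA : 0 < A) :
    ∃ (γ : ℕ) (C B : ℝ), 0 < C ∧ 0 < B ∧ ∀ (Ω : Set (ES N)) (y e : ES N) (ψ : ES N → ℝ) (ε : ℝ) (u : ES N → ℝ),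
      Chart Ω y e ψ Λ ε → HProp Ω u H → (∀ x ∈ Ω, 0 < u x) → ∀ r, 0 < r → B * r ≤ ε → ∀ q z,
      q ∈ Ω → q ∈ ball y (A * r) → κ * r ≤ ψ q → z ∈ Ω → z ∈ ball y (A * r) →
      u z * ψ z ^ γ ≤ C * r ^ γ * u q := by
  have hΛ0 : 0 < Λ := by linarith
  set b : ℝ := 1 + 1 / (16 * Λ) with hb
  have hτ0 : 0 < 1 / (16 * Λ) := by positivity
  have hτ1 : 1 / (16 * Λ) ≤ 1 / 16 := one_div_le_one_div_of_le (by norm_num) (by linarith)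
  have hb1 : 1 < b := by linarith
  have hb2 : b ≤ 2 := by linarith
  obtain ⟨γ, hγ⟩ := pow_unbounded_of_one_lt H hb1
  obtain ⟨C0, B0, hC0, hB0, hch⟩ := chain (N := N) (σ := min (1 / 2) κ) (A := A + 1) hΛ hH
    (by positivity) (by positivity)
  refine ⟨γ, C0 * (1 + (Λ * A) ^ γ), max B0 (A + 4), by positivity, by positivity, ?_⟩
  intro Ω y e ψ ε u ch hu hpos r hr hB q z hqΩ hq hψq hzΩ hz
  have hB1 : B0 * r ≤ ε := le_trans (by gcongr; exact le_max_left _ _) hB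
  have hB2 : (A + 4) * r ≤ ε := le_trans (by gcongr; exact le_max_right _ _) hB
  have hz' := mem_ball.1 hz
  have hzε : z ∈ ball y ε := by rw [mem_ball]; nlinarith
  have hψz : 0 < ψ z := (ch.mem z hzε).1 hzΩ
  have hAA : ball y (A * r) ⊆ ball y ((A + 1) * r) := ball_subset_ball (by nlinarith)
  have hσ1 : min (1 / 2) κ * r ≤ 1 / 2 * r := by gcongr; exact min_le_left _ _
  have hσ2 : min (1 / 2) κ * r ≤ κ * r := by gcongr; exact min_le_right _ _
  have hchq : ∀ x ∈ ball y ((A + 1) * r), 1 / 2 * r ≤ ψ x → u x ≤ C0 * u q := fun x hx hψx =>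
    hch Ω y e ψ ε u ch hu r hr hB1 x q hx (hAA hq) (by linarith) (by linarith)
  have hq0 := hpos q hqΩ
  have hC0' : 0 < C0 := by linarith
  by_cases hrψ : ψ z ≤ r
  · have key : ∀ n : ℕ, b ^ n * ψ z ≤ r → u z * ψ z ^ γ ≤ u (z + ((b ^ n - 1) * ψ z) • e) * (b ^ n * ψ z) ^ γ := by
      intro n
      induction n with
      | zero => intro _; simp
      | succ n ih =>
        intro hn
        have hbn : 0 < b ^ n := by positivity
        have hbn1 : 1 ≤ b ^ n := one_le_pow₀ hb1.le
        have hbn2 : b ^ n ≤ b ^ (n + 1) := pow_le_pow_right₀ hb1.le (by omega)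
        have hnr : b ^ n * ψ z ≤ r := le_trans (by gcongr) hn
        refine (ih hnr).trans ?_
        set x := z + ((b ^ n - 1) * ψ z) • e with hx
        set x' := z + ((b ^ (n + 1) - 1) * ψ z) • e with hx'
        have hψx : ψ x = b ^ n * ψ z := by rw [hx, ch.shift]; ring
        have hψx' : ψ x' = b ^ (n + 1) * ψ z := by rw [hx', ch.shift]; ring
        have hdx : dist x z = (b ^ n - 1) * ψ z := ch.dist_shift z (mul_nonneg (by linarith) hψz.le)
        have hdx' : dist x' z = (b ^ (n + 1) - 1) * ψ z := ch.dist_shift z (mul_nonneg (by linarith) hψz.le)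
        set s : ℝ := b ^ n * ψ z / Λ with hs
        have hs0 : 0 < s := by positivity
        have hsr : s ≤ r := (div_le_self (by positivity) hΛ).trans hnr
        have hsΛ : Λ * s = b ^ n * ψ z := by rw [hs]; field_simp
        have hxx : x - x' = (-(s / 16)) • e := by
          rw [hx, hx', add_sub_add_left_eq_sub, ← sub_smul]
          congr 1
          rw [pow_succ, hs, hb]
          field_simp
          ring
        have h1 : u x ≤ H * u x' := by
          apply hu x x' s hs0
          · apply ch.ball_sub (by rw [hsΛ, hψx])
            apply ball_subset_ball'
            have := dist_triangle x z y
            nlinarith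
          · apply ch.ball_sub (by rw [hsΛ, hψx']; gcongr)
            apply ball_subset_ball'
            have := dist_triangle x' z y
            nlinarith
          · rw [hxx, norm_smul, ch.enorm, norm_neg, Real.norm_of_nonneg (by positivity), mul_one]
        have hx'Ω : x' ∈ Ω := by
          rw [ch.mem]
          · rw [hψx']; positivity
          · rw [mem_ball]
            have := dist_triangle x' z y
            nlinarith
        have hux' := hpos x' hx'Ω
        calc u x * (b ^ n * ψ z) ^ γ ≤ (b ^ γ * u x') * (b ^ n * ψ z) ^ γ := by
              gcongr
              exact h1.trans (by gcongr)
          _ = u x' * (b ^ (n + 1) * ψ z) ^ γ := by rw [pow_succ, mul_comm (b ^ n) b, mul_assoc b, mul_pow b]; ring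
    obtain ⟨n, hn1, hn2⟩ := exists_nat_pow_near (x := r / ψ z) (y := b) (by rw [le_div_iff₀ hψz]; linarith) hb1
    rw [le_div_iff₀ hψz] at hn1
    rw [div_lt_iff₀ hψz, pow_succ] at hn2
    have hbn1 : 1 ≤ b ^ n := one_le_pow₀ hb1.le
    have hbn0 : 0 < b ^ n * ψ z := by positivity
    have h1 := key n hn1
    set x := z + ((b ^ n - 1) * ψ z) • e with hx
    have hψx : ψ x = b ^ n * ψ z := by rw [hx, ch.shift]; ring
    have hdx : dist x z = (b ^ n - 1) * ψ z := ch.dist_shift z (mul_nonneg (by linarith) hψz.le)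
    have h2 : u x ≤ C0 * u q := by
      apply hchq
      · rw [mem_ball]
        have := dist_triangle x z y
        nlinarith
      · rw [hψx]; nlinarith
    calc u z * ψ z ^ γ ≤ u x * (b ^ n * ψ z) ^ γ := h1
      _ ≤ (C0 * u q) * r ^ γ := by gcongr
      _ ≤ C0 * (1 + (Λ * A) ^ γ) * r ^ γ * u q := by
        have : 0 ≤ C0 * (Λ * A) ^ γ * r ^ γ * u q := by positivity
        linarith
  · push Not at hrψ
    have h2 : u z ≤ C0 * u q := hchq z (hAA hz) (by linarith)
    have h3 : ψ z ≤ Λ * A * r := by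
      have := (abs_le.1 (ch.lip z y)).2
      rw [ch.zero, ← dist_eq_norm] at this
      nlinarith
    calc u z * ψ z ^ γ ≤ (C0 * u q) * (Λ * A * r) ^ γ := by gcongr
      _ = C0 * (Λ * A) ^ γ * r ^ γ * u q := by rw [mul_pow]; ring
      _ ≤ C0 * (1 + (Λ * A) ^ γ) * r ^ γ * u q := by
        have : 0 ≤ C0 * r ^ γ * u q := by positivity
        linarith

end Part6

section Part7

variable {N : ℕ}

/-! ## Carleson estimate -/

lemma indicator_cont {Ω : Set (ES N)} (hΩ : IsOpen Ω) {v : ES N → ℝ} {y z : ES N}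
    (hc : ContinuousOn v Ω)
    (hbc : ∀ z ∈ frontier Ω, z ≠ y → Tendsto v (𝓝[Ω] z) (𝓝 0)) (hzy : z ≠ y) :
    ContinuousAt (indicator Ω v) z := by
  by_cases hz : z ∈ Ω
  · refine (hc.continuousAt (hΩ.mem_nhds hz)).congr ?_
    filter_upwards [hΩ.mem_nhds hz] with w hw
    rw [indicator_of_mem hw]
  · unfold ContinuousAt
    rw [indicator_of_notMem hz, ← nhdsWithin_univ, ← union_compl_self Ω, nhdsWithin_union]
    refine Tendsto.sup ?_ ?_
    · by_cases hzc : z ∈ closure Ω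
      · have hzf : z ∈ frontier Ω := by rw [hΩ.frontier_eq]; exact ⟨hzc, hz⟩
        refine (hbc z hzf hzy).congr' ?_
        filter_upwards [self_mem_nhdsWithin] with w hw
        rw [indicator_of_mem hw]
      · rw [mem_closure_iff_nhdsWithin_neBot, not_neBot] at hzc
        rw [hzc]; exact tendsto_bot
    · refine tendsto_const_nhds.congr' ?_
      filter_upwards [self_mem_nhdsWithin] with w hw
      rw [indicator_of_notMem hw]

set_option maxHeartbeats 1000000 in
lemma carleson (hN : 0 < N) {Λ H κ : ℝ} (hΛ : 1 ≤ Λ) (hH : 1 ≤ H) (hκ : 0 < κ) :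
    ∃ C B : ℝ, 0 < C ∧ 0 < B ∧ ∀ (Ω : Set (ES N)) (y e : ES N) (ψ : ES N → ℝ) (ε : ℝ) (v : ES N → ℝ),
      Chart Ω y e ψ Λ ε → HProp Ω v H → (∀ x ∈ Ω, 0 < v x) → SubM Ω v →
      (∀ z ∈ frontier Ω, z ≠ y → Tendsto v (𝓝[Ω] z) (𝓝 0)) →
      ∀ r, 0 < r → B * r ≤ ε → ∀ q z, q ∈ Ω → q ∈ ball y (8 * r) → κ * r ≤ ψ q → z ∈ Ω →
      3 * r ≤ dist z y → dist z y ≤ 5 * r → v z ≤ C * v q := by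
  have hΛ0 : 0 < Λ := by linarith
  obtain ⟨γ, C0, B0, hC0, hB0, hpoly⟩ := poly (N := N) (A := 8) hΛ hH hκ (by norm_num)
  have hθ := theta_mem hN hΛ
  set θ := theta N Λ with hθd
  set g : ℕ := γ + 1 with hg
  have hg0 : (0 : ℝ) < g := by rw [hg]; positivity
  have hg1 : (1 : ℝ) ≤ g := by rw [hg]; push_cast; linarith [(Nat.cast_nonneg γ : (0:ℝ) ≤ γ)]
  set ε0 : ℝ := (1 - θ) / (14 * g) with hε0
  have hε0p : 0 < ε0 := div_pos (by linarith) (by positivity)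
  have hε0g : ε0 * g = (1 - θ) / 14 := by rw [hε0]; field_simp
  have hε0l : ε0 ≤ 1 / 14 := by nlinarith
  refine ⟨8 * Λ * C0 / ε0 ^ g, max B0 9, by positivity, by positivity, ?_⟩
  intro Ω y e ψ ε v ch hv hpos hsub hbc r hr hB q z hqΩ hq hψq hzΩ hz3 hz5
  have hB1 : B0 * r ≤ ε := le_trans (by gcongr; exact le_max_left _ _) hB
  have hB2 : 9 * r ≤ ε := le_trans (by gcongr; exact le_max_right _ _) hB
  set S : Set (ES N) := {z | r ≤ dist z y ∧ dist z y ≤ 7 * r} with hS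
  have hc1 : IsClosed {z : ES N | r ≤ dist z y} := isClosed_le continuous_const (by fun_prop)
  have hc2 : IsClosed {z : ES N | dist z y ≤ 7 * r} := isClosed_le (by fun_prop) continuous_const
  have hScl : IsClosed S := hc1.inter hc2
  have hSc : IsCompact S :=
    (isCompact_closedBall y (7 * r)).of_isClosed_subset hScl fun w hw => hw.2
  set d : ES N → ℝ := fun z => min (dist z y - r) (7 * r - dist z y) with hd
  have hdc : Continuous d := by rw [hd]; fun_prop
  have hdl : ∀ w w' : ES N, d w' - dist w w' ≤ d w := by
    intro w w'
    have h1 := dist_triangle w w' y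
    have h2 := dist_triangle_left w' y w
    have h3 : d w' ≤ dist w' y - r := min_le_left _ _
    have h4 : d w' ≤ 7 * r - dist w' y := min_le_right _ _
    apply le_min <;> linarith
  have hdS : ∀ w, 0 ≤ d w → w ∈ S := by
    intro w hw
    have h3 : d w ≤ dist w y - r := min_le_left _ _
    have h4 : d w ≤ 7 * r - dist w y := min_le_right _ _
    exact ⟨by linarith, by linarith⟩
  set vt := indicator Ω v with hvt
  have hvtc : ContinuousOn vt S := by
    intro w hw
    refine (indicator_cont ch.isOpen hsub.1 hbc ?_).continuousWithinAt
    rintro rfl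
    have := hw.1
    rw [dist_self] at this
    linarith
  have hzS : z ∈ S := ⟨by linarith, by linarith⟩
  obtain ⟨z1, hz1S, hmax⟩ := hSc.exists_isMaxOn ⟨z, hzS⟩ (f := fun w => vt w * d w ^ g)
    (hvtc.mul (hdc.pow g).continuousOn)
  have hmax' : ∀ w ∈ S, vt w * d w ^ g ≤ vt z1 * d z1 ^ g := fun w hw => hmax hw
  have hdz : 2 * r ≤ d z := by apply le_min <;> linarith
  have hvz := hpos z hzΩ
  have hΦz : v z * (2 * r) ^ g ≤ vt z1 * d z1 ^ g := by
    refine le_trans ?_ (hmax' z hzS)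
    rw [hvt, indicator_of_mem hzΩ]
    gcongr
  have hΦpos : 0 < vt z1 * d z1 ^ g := lt_of_lt_of_le (by positivity) hΦz
  have hz1Ω : z1 ∈ Ω := by
    by_contra h
    rw [hvt, indicator_of_notMem h, zero_mul] at hΦpos
    exact lt_irrefl _ hΦpos
  rw [hvt, indicator_of_mem hz1Ω] at hΦz hΦpos hmax'
  have hv1 := hpos z1 hz1Ω
  have hd1 : 0 < d z1 := by
    have h0 : 0 ≤ d z1 := le_min (by linarith [hz1S.1]) (by linarith [hz1S.2])
    refine lt_of_le_of_ne h0 ?_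
    intro h
    rw [← h, zero_pow (by omega), mul_zero] at hΦpos
    exact lt_irrefl _ hΦpos
  have hSε : ∀ w ∈ S, w ∈ ball y ε := fun w hw => by rw [mem_ball]; linarith [hw.2]
  have hψ1 : 0 < ψ z1 := (ch.mem z1 (hSε z1 hz1S)).1 hz1Ω
  have hclaim : ε0 * d z1 ≤ ψ z1 := by
    by_contra! hlt
    have hb0 : 0 < 1 - 7 * ε0 := by linarith
    have hdw : ∀ w ∈ ball z1 (7 * ψ z1), (1 - 7 * ε0) * d z1 ≤ d w := by
      intro w hw
      have := hdl w z1
      rw [mem_ball] at hw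
      nlinarith
    have hdw0 : ∀ w ∈ ball z1 (7 * ψ z1), 0 < d w := fun w hw =>
      lt_of_lt_of_le (by positivity) (hdw w hw)
    have hdec := decay hN ch (x := z1) (h := ψ z1) (S := v z1 / (1 - 7 * ε0) ^ g) (v := v) hz1Ω hψ1 le_rfl
      (fun w hw => hSε w (hdS w (hdw0 w hw).le)) (hsub.mono inter_subset_left) ?_ (by positivity) ?_
    · have hbern : 1 + (g : ℝ) * (-(7 * ε0)) ≤ (1 + -(7 * ε0)) ^ g :=
        one_add_mul_le_pow (by linarith) g
      have h1 : θ < (1 - 7 * ε0) ^ g := by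
        have : (1 + -(7 * ε0)) ^ g = (1 - 7 * ε0) ^ g := by ring
        rw [this] at hbern
        nlinarith
      have h2 : 0 < (1 - 7 * ε0) ^ g := by positivity
      rw [← mul_div_assoc, le_div_iff₀ h2] at hdec
      nlinarith
    · intro x hx ε' hε'
      have hxy : x ≠ y := by
        rintro rfl
        have h1 := hdS x (hdw0 x hx.2).le
        have := h1.1
        rw [dist_self] at this
        linarith
      filter_upwards [(hbc x hx.1 hxy).eventually (gt_mem_nhds hε')] with w hw
      exact hw.le
    · intro w hw
      have h1 := hmax' w (hdS w (hdw0 w hw.2).le)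
      rw [indicator_of_mem hw.1] at h1
      have h2 := hdw w hw.2
      have hvw := hpos w hw.1
      have h3 : v w * ((1 - 7 * ε0) * d z1) ^ g ≤ v z1 * d z1 ^ g := le_trans (by gcongr) h1
      rw [mul_pow, ← mul_assoc] at h3
      rw [le_div_iff₀ (by positivity)]
      exact le_of_mul_le_mul_right h3 (by positivity)
  have hz1b : z1 ∈ ball y (8 * r) := by rw [mem_ball]; linarith [hz1S.2]
  have hp := hpoly Ω y e ψ ε v ch hv hpos r hr hB1 q z1 hqΩ hq hψq hz1Ω hz1b
  have hψle : ψ z1 ≤ 8 * Λ * r := by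
    have := (abs_le.1 (ch.lip z1 y)).2
    rw [ch.zero, ← dist_eq_norm] at this
    have := mem_ball.1 hz1b
    nlinarith
  have hq0 := hpos q hqΩ
  have h1 : v z1 * (ε0 * d z1) ^ g ≤ 8 * Λ * C0 * r ^ g * v q := by
    calc v z1 * (ε0 * d z1) ^ g ≤ v z1 * ψ z1 ^ g := by gcongr
      _ = (v z1 * ψ z1 ^ γ) * ψ z1 := by rw [hg, pow_succ]; ring
      _ ≤ (C0 * r ^ γ * v q) * (8 * Λ * r) := by gcongr
      _ = _ := by rw [hg, pow_succ]; ring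
  have h2 : ε0 ^ g * (v z * (2 * r) ^ g) ≤ 8 * Λ * C0 * r ^ g * v q := by
    refine le_trans ?_ h1
    rw [mul_pow ε0]
    calc ε0 ^ g * (v z * (2 * r) ^ g) ≤ ε0 ^ g * (v z1 * d z1 ^ g) := by gcongr
      _ = _ := by ring
  have h3 : ε0 ^ g * (v z * r ^ g) ≤ 8 * Λ * C0 * r ^ g * v q := by
    refine le_trans ?_ h2
    gcongr
    linarith
  rw [div_mul_eq_mul_div, le_div_iff₀ (by positivity)]
  have hrg : 0 < r ^ g := by positivity
  refine le_of_mul_le_mul_right (a := r ^ g) ?_ hrg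
  linarith

end Part7

section Part8

variable {N : ℕ}

/-! ## Conclusion -/

lemma chart_exists {Ω : Set (ES N)} (hΩ : IsLipschitzDomain Ω) {y : ES N} (hy : y ∈ frontier Ω) :
    ∃ (e : ES N) (ψ : ES N → ℝ) (Λ ε : ℝ), Chart Ω y e ψ Λ ε := by
  obtain ⟨hop, -, hloc⟩ := hΩ
  obtain ⟨g, i, f, L, ε, hε, hf, hind, hmem⟩ := hloc y hy
  have hL : (0 : ℝ) ≤ L := L.2
  have hlip : ∀ x w : ES N, |(g x i - f (g x)) - (g w i - f (g w))| ≤ (1 + L) * ‖x - w‖ := by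
    intro x w
    have hg : ‖g x - g w‖ = ‖x - w‖ := by rw [← map_sub, g.norm_map]
    have h1 : |g x i - g w i| ≤ ‖x - w‖ := by
      rw [← hg]
      have := PiLp.norm_apply_le (g x - g w) i
      simpa using this
    have h2 : |f (g x) - f (g w)| ≤ L * ‖x - w‖ := by
      have := hf.dist_le_mul (g x) (g w)
      rwa [Real.dist_eq, dist_eq_norm, hg] at this
    rw [abs_le] at *
    constructor <;> linarith [h1.1, h1.2, h2.1, h2.2]
  have hmem' : ∀ x ∈ ball y ε, (x ∈ Ω ↔ 0 < g x i - f (g x)) := by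
    intro x hx
    rw [hmem x hx, sub_pos]
  have hcont : Continuous fun x : ES N => g x i - f (g x) := by
    have h1 : Continuous fun x : ES N => f (g x) := hf.continuous.comp g.continuous
    have h2 : Continuous fun x : ES N => g x i := (EuclideanSpace.proj (𝕜 := ℝ) i).continuous.comp g.continuous
    exact h2.sub h1
  have hyb : y ∈ ball y ε := mem_ball_self hε
  have hyn : y ∉ Ω := by rw [hop.frontier_eq] at hy; exact hy.2
  have hyc : y ∈ closure Ω := frontier_subset_closure hy
  refine ⟨g.symm (EuclideanSpace.single i 1), fun x => g x i - f (g x), 1 + L, ε, hop, hε,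
    by linarith, ?_, hlip, ?_, hmem', ?_⟩
  · rw [LinearIsometryEquiv.norm_map]; simp
  · intro x s
    have h1 : g (x + s • g.symm (EuclideanSpace.single i 1)) = g x + s • EuclideanSpace.single i 1 := by
      rw [map_add, map_smul, g.apply_symm_apply]
    have h2 : f (g x + s • EuclideanSpace.single i 1) = f (g x) := by
      apply hind
      intro j hj
      simp [hj]
    simp only [h1, h2]
    simp
    ring
  · apply le_antisymm
    · by_contra! h
      exact hyn ((hmem' y hyb).2 h)
    · by_contra! h
      have h1 : {x : ES N | g x i - f (g x) < 0} ∩ ball y ε ∈ 𝓝 y :=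
        inter_mem ((isOpen_lt hcont continuous_const).mem_nhds h) (isOpen_ball.mem_nhds hyb)
      obtain ⟨x, hx1, hx2⟩ := mem_closure_iff_nhds.1 hyc _ h1
      have h3 := (hmem' x hx1.2).1 hx2
      have h4 : g x i - f (g x) < 0 := hx1.1
      linarith

lemma weak_of {Ω : Set (ES N)} {V u : ES N → ℝ} (h : LVHarmonic Ω V u) :
    Weak Ω u (fun x => V x * u x) := ⟨h.1, h.2.2.2⟩

lemma subM_of {Ω : Set (ES N)} {V u : ES N → ℝ} (h : Weak Ω u (fun x => V x * u x))
    (hV : ∀ x ∈ Ω, 0 ≤ V x) (hu : ∀ x ∈ Ω, 0 < u x) : SubM Ω u :=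
  ⟨h.1, fun _ _ _ hr hrR hb => weak_sub h hr hrR hb
    fun w hw => mul_nonneg (hV w (hb hw)) (hu w (hb hw)).le⟩

lemma superM_of {Ω : Set (ES N)} {u : ES N → ℝ} (h : Weak Ω u (fun x => (0 : ℝ) * u x))
    (hu : ∀ x ∈ Ω, 0 < u x) : SubM Ω (fun x => - u x) := by
  refine ⟨h.1.neg, fun x R r hr hrR hb => ?_⟩
  have h1 := weak_super h hr hrR hb (A := 0) (fun w hw => (hu w (hb hw)).le)
    (fun w _ => by simp) (fun w _ => by simp) le_rfl
  have h2 : avg (fun x => - u x) x r = - avg u x r := by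
    unfold avg
    rw [← integral_neg]
    congr 1; funext w; ring
  rw [h2]
  simp at h1
  linarith

set_option maxHeartbeats 1000000 in
lemma core (hN : 0 < N) {Λ κ a : ℝ} (hΛ : 1 ≤ Λ) (hκ : 0 < κ) (ha : 0 ≤ a) :
    ∃ C B : ℝ, 0 < C ∧ 0 < B ∧ ∀ (Ω : Set (ES N)) (y e : ES N) (ψ : ES N → ℝ) (ε : ℝ)
      (V K KV : ES N → ℝ) (x₀ : ES N), Chart Ω y e ψ Λ ε → Bornology.IsBounded Ω → VClass Ω a V →
      IsMartinKernel Ω (fun _ => 0) x₀ y K → IsMartinKernel Ω V x₀ y KV → x₀ ∈ Ω → y ∈ frontier Ω →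
      ∀ r, 0 < r → B * r ≤ ε → 4 * r < dist x₀ y → ∀ q ∈ Ω, q ∈ ball y (8 * r) → κ * r ≤ ψ q →
      K q ≤ C * KV q := by
  have hΛ0 : 0 < Λ := by linarith
  have hH : 1 ≤ hC N a := hC_ge N ha
  obtain ⟨δ, M, hδ, hδ8, hM, hbhp⟩ := bhp hN hΛ
  set σ : ℝ := min (δ / 2) κ with hσ
  have hσ0 : 0 < σ := by positivity
  obtain ⟨Cc, Bc, hCc, hBc, hchain⟩ := chain (N := N) (A := 8) hΛ hH hσ0 (by norm_num)
  obtain ⟨C1, B1, hC1, hB1, hcarl⟩ := carleson hN hΛ hH hκ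
  have hCc0 : 0 < Cc := by linarith
  refine ⟨Cc * (M + 1) * C1, Bc + B1 + 6, by positivity, by positivity, ?_⟩
  intro Ω y e ψ ε V K KV x₀ ch hbd hV hK hKV hx₀ hy r hr hBr hrx q hq hqb hψq
  have hBr1 : Bc * r ≤ ε := by nlinarith
  have hBr2 : B1 * r ≤ ε := by nlinarith
  have hBr3 : 6 * r ≤ ε := by nlinarith
  obtain ⟨hK1, hKpos, hKx, hKbc⟩ := hK
  obtain ⟨hKV1, hKVpos, hKVx, hKVbc⟩ := hKV
  have hKw := weak_of hK1
  have hKVw := weak_of hKV1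
  have hyn : y ∉ Ω := by rw [ch.isOpen.frontier_eq] at hy; exact hy.2
  have hne : (Ωᶜ).Nonempty := ⟨y, hyn⟩
  have hV0 : VClass Ω a (fun _ => 0) := ⟨measurable_const, fun x _ => ⟨le_rfl, by simpa using ha⟩⟩
  have hKH : HProp Ω K (hC N a) := harnack_step ha hV0 hne hKw hKpos
  have hKVH : HProp Ω KV (hC N a) := harnack_step ha hV hne hKVw hKVpos
  have hKVs : SubM Ω KV := subM_of hKVw (fun x hx => (hV.2 x hx).1) hKVpos
  have hKs : SubM Ω (fun x => - K x) := superM_of hKw hKpos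
  have hKq := hKpos q hq
  have hKVq := hKVpos q hq
  set B : ℝ := Cc * (M + 1) with hB
  have hB0 : 0 < B := by positivity
  set α : ℝ := B / K q with hα
  set β : ℝ := 1 / (C1 * KV q) with hβ
  have hα0 : 0 < α := by positivity
  have hβ0 : 0 < β := by positivity
  set w : ES N → ℝ := fun x => α * K x - β * KV x with hw
  have hwS : SubM Ω (fun x => - w x) := by
    have h1 := (hKs.smul hα0.le).add (hKVs.smul hβ0.le)
    have h2 : (fun x => - w x) = fun x => α * - K x + β * KV x := by
      funext x; simp only [hw]; ring
    rw [h2]; exact h1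
  have hwc : ContinuousOn (fun x => - w x) Ω := hwS.1
  have hwbc : ∀ z ∈ frontier Ω, z ≠ y → ∀ ε > 0, ∀ᶠ x in 𝓝[Ω] z, - w x ≤ ε := by
    intro z hz hzy ε' hε'
    have h1 : Tendsto (fun x => - w x) (𝓝[Ω] z) (𝓝 (-(α * 0 - β * 0))) :=
      (((hKbc z hz hzy).const_mul α).sub ((hKVbc z hz hzy).const_mul β)).neg
    have h2 : -(α * 0 - β * 0) = (0 : ℝ) := by ring
    rw [h2] at h1
    filter_upwards [h1.eventually (gt_mem_nhds hε')] with x hx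
    exact hx.le
  have hβle : ∀ z ∈ Ω, 3 * r ≤ dist z y → dist z y ≤ 5 * r → β * KV z ≤ 1 := by
    intro z hz h3 h5
    have := hcarl Ω y e ψ ε KV ch hKVH hKVpos hKVs hKVbc r hr hBr2 q z hq hqb hψq hz h3 h5
    rw [hβ, div_mul_eq_mul_div, one_mul, div_le_one (by positivity)]
    exact this
  have hw1 : ∀ z ∈ Ω, 3 * r ≤ dist z y → dist z y ≤ 5 * r → -1 ≤ w z := by
    intro z hz h3 h5
    have h1 := hβle z hz h3 h5
    have h2 : 0 < α * K z := mul_pos hα0 (hKpos z hz)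
    simp only [hw]; linarith
  have hσκ : σ * r ≤ κ * r := by gcongr; exact min_le_right _ _
  have hσδ : σ * r ≤ δ / 2 * r := by gcongr; exact min_le_left _ _
  have hwM : ∀ z ∈ Ω, 3 * r ≤ dist z y → dist z y ≤ 5 * r → σ * r ≤ ψ z → M ≤ w z := by
    intro z hz h3 h5 hψ
    have h1 := hβle z hz h3 h5
    have h2 := hchain Ω y e ψ ε K ch hKH r hr hBr1 q z hqb (by rw [mem_ball]; linarith)
      (by linarith) hψ
    have h4 : M + 1 ≤ α * K z := by
      rw [hα, div_mul_eq_mul_div, le_div_iff₀ hKq, hB]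
      nlinarith
    simp only [hw]; linarith
  -- nonnegativity on the sphere
  have hsph : ∀ z ∈ Ω, dist z y = 4 * r → 0 ≤ w z := by
    intro z hz hzr
    have hzε : z ∈ ball y ε := by rw [mem_ball]; linarith
    have hψz : 0 < ψ z := (ch.mem z hzε).1 hz
    by_cases hψ : ψ z < r / 2
    · set p := z + (-ψ z) • e with hp
      have hψp : ψ p = 0 := by rw [hp, ch.shift]; ring
      have hpz : p + ψ z • e = z := by rw [hp]; module
      have hdp : dist z p = ψ z := by
        have := ch.dist_shift p hψz.le
        rwa [hpz] at this
      have hbp : ∀ x ∈ ball p (r / 2), 3 * r ≤ dist x y ∧ dist x y ≤ 5 * r := by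
        intro x hx
        rw [mem_ball] at hx
        have h1 := dist_triangle x p y
        have h2 := dist_triangle_left p y z
        have h3 := dist_triangle z x y
        have h4 := dist_triangle_right z x p
        have h5 := dist_triangle x z y
        rw [dist_comm z x] at *
        constructor <;> linarith
      have hpε : ball p (r / 2) ⊆ ball y ε := fun x hx => by
        rw [mem_ball]; linarith [(hbp x hx).2]
      have := hbhp Ω y e ψ ε ch p (r / 2) w (by positivity) hψp hpε (hwS.mono inter_subset_left)
        (fun x hx => hwbc x hx.1 (by
          rintro rfl
          have := (hbp _ hx.2).1
          rw [dist_self] at this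
          linarith))
        (fun x hx hψx => hwM x hx.1 (hbp x hx.2).1 (hbp x hx.2).2 (by linarith))
        (fun x hx => hw1 x hx.1 (hbp x hx.2).1 (hbp x hx.2).2) (ψ z) hψz hψ
      rwa [hpz] at this
    · push Not at hψ
      have := hwM z hz (by linarith) (by linarith) (by nlinarith)
      linarith
  set D : Set (ES N) := Ω ∩ (closedBall y (4 * r))ᶜ with hD
  have hDo : IsOpen D := ch.isOpen.inter isClosed_closedBall.isOpen_compl
  have hmp := max_principle hN hDo (hbd.subset inter_subset_left) (hwS.mono inter_subset_left) ?_ x₀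
    ⟨hx₀, by rw [mem_compl_iff, mem_closedBall, not_le]; exact hrx⟩
  · have h1 : β * KV x₀ ≤ α * K x₀ := by simp only [hw] at hmp; linarith
    rw [hKx, hKVx, mul_one, mul_one, hα, hβ, div_le_div_iff₀ (by positivity) hKq] at h1
    linarith
  · intro z hz ε' hε'
    have hzc : z ∈ closure D := frontier_subset_closure hz
    have hznD : z ∉ D := by rw [hDo.frontier_eq] at hz; exact hz.2
    have hz4 : 4 * r ≤ dist z y := by
      have hcl : IsClosed {x : ES N | 4 * r ≤ dist x y} := isClosed_le continuous_const (by fun_prop)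
      refine closure_minimal (fun x hx => ?_) hcl hzc
      have := hx.2
      rw [mem_compl_iff, mem_closedBall, not_le] at this
      exact this.le
    by_cases hzΩ : z ∈ Ω
    · have hz4' : dist z y = 4 * r := by
        refine le_antisymm ?_ hz4
        by_contra! h
        exact hznD ⟨hzΩ, by rw [mem_compl_iff, mem_closedBall, not_le]; exact h⟩
      have h1 := hsph z hzΩ hz4'
      have h2 := (hwc.continuousAt (ch.isOpen.mem_nhds hzΩ)).eventually
        (gt_mem_nhds (show - w z < ε' by linarith))
      filter_upwards [nhdsWithin_le_nhds h2] with x hx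
      exact hx.le
    · have hzf : z ∈ frontier Ω := by
        rw [ch.isOpen.frontier_eq]; exact ⟨closure_mono inter_subset_left hzc, hzΩ⟩
      refine nhdsWithin_mono z inter_subset_left (hwbc z hzf ?_ ε' hε')
      rintro rfl
      rw [dist_self] at hz4
      linarith

theorem final (hN : 2 ≤ N) (Ω : Set (ES N))
    (hΩ : IsLipschitzDomain Ω) (hbd : Bornology.IsBounded Ω)
    (x₀ : ES N) (hx₀ : x₀ ∈ Ω) (a : ℝ) (ha : 0 < a)
    (V : ES N → ℝ) (hV : VClass Ω a V)
    (y : ES N) (hy : y ∈ frontier Ω)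
    (ν : ES N) (η : ℝ) (hν : ν ≠ 0) (hη : 0 < η)
    (hcone : truncCone y ν η ⊆ Ω \ {x₀})
    (K KV : ES N → ℝ)
    (hK : IsMartinKernel Ω (fun _ => 0) x₀ y K)
    (hKV : IsMartinKernel Ω V x₀ y KV) :
    ∃ C' : ℝ, 0 < C' ∧ ∃ t₀ > (0:ℝ), ∀ t : ℝ, 0 < t → t ≤ t₀ →
      K (y + t • ν) ≤ C' * KV (y + t • ν) := by
  obtain ⟨e, ψ, Λ, ε, ch⟩ := chart_exists hΩ hy
  have hν0 : 0 < ‖ν‖ := norm_pos_iff.2 hν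
  have hyn : y ∉ Ω := by rw [ch.isOpen.frontier_eq] at hy; exact hy.2
  have hxy : 0 < dist x₀ y := dist_pos.2 (fun h => hyn (h ▸ hx₀))
  have hε := ch.eps
  obtain ⟨C, B, hC, hB, hcore⟩ := core (N := N) (κ := η / (2 * ‖ν‖)) (by omega) ch.lam (by positivity) ha.le
  set T : ℝ := min η (min (ε / (B * ‖ν‖ + ‖ν‖ + η)) (dist x₀ y / (5 * ‖ν‖))) with hT
  refine ⟨C, hC, T, by positivity, ?_⟩
  intro t ht htT
  have ht1 : t ≤ η := htT.trans (min_le_left _ _)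
  have ht2 : t * (B * ‖ν‖ + ‖ν‖ + η) ≤ ε := by
    rw [← le_div_iff₀ (by positivity)]
    exact htT.trans ((min_le_right _ _).trans (min_le_left _ _))
  have ht3 : t * (5 * ‖ν‖) ≤ dist x₀ y := by
    rw [← le_div_iff₀ (by positivity)]
    exact htT.trans ((min_le_right _ _).trans (min_le_right _ _))
  set q := y + t • ν with hq
  have htν : 0 < t * ‖ν‖ := by positivity
  have htη : 0 < t * η := by positivity
  have htB : 0 < t * (B * ‖ν‖) := by positivity
  have hqy : dist q y = t * ‖ν‖ := by
    rw [hq, dist_eq_norm, add_sub_cancel_left, norm_smul, Real.norm_of_nonneg ht.le]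
  have hballq : ∀ u : ES N, ‖u‖ ≤ η * t → q + u ∈ Ω := by
    intro u hu
    apply (hcone _).1
    refine ⟨t, t⁻¹ • u, ht, ht1, ?_, ?_⟩
    · rw [norm_smul, norm_inv, Real.norm_of_nonneg ht.le, inv_mul_le_iff₀ ht]
      linarith
    · rw [hq, smul_add, smul_smul, mul_inv_cancel₀ ht.ne', one_smul, add_assoc]
  have hqΩ : q ∈ Ω := by simpa using hballq 0 (by simp; positivity)
  have hψq : η / (2 * ‖ν‖) * (t * ‖ν‖) ≤ ψ q := by
    have e1 : η / (2 * ‖ν‖) * (t * ‖ν‖) = η * t / 2 := by field_simp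
    rw [e1]
    have hn : ‖(-(η * t / 2)) • e‖ = η * t / 2 := by
      rw [norm_smul, ch.enorm, norm_neg, Real.norm_of_nonneg (by positivity), mul_one]
    have h1 := hballq ((-(η * t / 2)) • e) (by rw [hn]; linarith)
    rw [ch.mem, ch.shift] at h1
    · linarith
    · rw [mem_ball]
      have h2 := dist_triangle (q + (-(η * t / 2)) • e) q y
      have h3 : dist (q + (-(η * t / 2)) • e) q = η * t / 2 := by
        rw [dist_eq_norm, add_sub_cancel_left, hn]
      rw [h3, hqy] at h2
      nlinarith
  exact hcore Ω y e ψ ε V K KV x₀ ch hbd hV hK hKV hx₀ hy (t * ‖ν‖) htν (by nlinarith)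
    (by nlinarith) q hqΩ (by rw [mem_ball, hqy]; nlinarith) hψq

end Part8

/-- Corollary `KVKcoro`. If `ν` is a pseudo-normal at `y ∈ ∂Ω`,
then `K_y(y+tν) ≤ C' K_y^V(y+tν)` for some `C' > 0` and all small `t > 0`. -/
theorem statement13 {N : ℕ} (hN : 2 ≤ N) (Ω : Set (ES N))
    (hΩ : IsLipschitzDomain Ω) (hbd : Bornology.IsBounded Ω)
    (x₀ : ES N) (hx₀ : x₀ ∈ Ω) (a : ℝ) (ha : 0 < a)
    (V : ES N → ℝ) (hV : VClass Ω a V)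
    (y : ES N) (hy : y ∈ frontier Ω)
    (ν : ES N) (η : ℝ) (hν : ν ≠ 0) (hη : 0 < η)
    (hcone : truncCone y ν η ⊆ Ω \ {x₀})
    (K KV : ES N → ℝ)
    (hK : IsMartinKernel Ω (fun _ => 0) x₀ y K)
    (hKV : IsMartinKernel Ω V x₀ y KV) :
    ∃ C' : ℝ, 0 < C' ∧ ∃ t₀ > (0:ℝ), ∀ t : ℝ, 0 < t → t ≤ t₀ →
      K (y + t • ν) ≤ C' * KV (y + t • ν) := by
  exact final hN Ω hΩ hbd x₀ hx₀ a ha V hV y hy ν η hν hη hcone K KV hK hKV
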